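/- Let ε_k → 0 as k → ∞ and let φ_{ε_k} be a sequence of normalised self-similar profiles for K_{ε_k}. Then φ_{ε_k}(x) → e^{−x} as k → ∞ for every x ∈ (0,∞) at which every φ_{ε_k} satisfies the profile equation; in particular φ_{ε_k}(x) → e^{−x} for almost every x ∈ (0,∞). -/

import Mathlib

open MeasureTheory Real Set Filter

noncomputable def weight (a b x : ℝ) : ℝ := if x ≤ 1 then x ^ a else x ^ b

noncomputable def Xnorm (a b : ℝ) (g : ℝ → ℝ) : ℝ :=
  ∫ x in Ioi (0:ℝ), |g x| * weight a b x

def MemX (a b : ℝ) (g : ℝ → ℝ) : Prop :=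
  IntegrableOn (fun x => g x * weight a b x) (Ioi 0)

noncomputable def Kern (ε : ℝ) (W : ℝ → ℝ → ℝ) (x y : ℝ) : ℝ := 2 + ε * W x y

def GoodW (α : ℝ) (W : ℝ → ℝ → ℝ) : Prop :=
  ContinuousOn (fun p : ℝ × ℝ => W p.1 p.2) (Ioi 0 ×ˢ Ioi 0) ∧
  (∀ x y : ℝ, 0 < x → 0 < y → W x y = W y x) ∧
  (∀ l x y : ℝ, 0 < l → 0 < x → 0 < y → W (l * x) (l * y) = W x y) ∧
  (∀ x y : ℝ, 0 < x → 0 < y → 0 ≤ W x y ∧ W x y ≤ (x / y) ^ α + (y / x) ^ α)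

def IsProfile (K : ℝ → ℝ → ℝ) (φ : ℝ → ℝ) : Prop :=
  LocallyIntegrableOn φ (Ioi 0) ∧
  (∀ᵐ x ∂(volume.restrict (Ioi (0:ℝ))), 0 ≤ φ x) ∧
  IntegrableOn (fun x => x * φ x) (Ioi 0) ∧
  (∀ᵐ x ∂(volume.restrict (Ioi (0:ℝ))),
    x ^ 2 * φ x = ∫ y in Ioo 0 x, ∫ z in Ioi (x - y), y * K y z * φ y * φ z)

def IsNormalised (φ : ℝ → ℝ) : Prop := ∫ x in Ioi (0:ℝ), x * φ x = 1

/-!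
Apply the profile equation to the weight `(1 - exp (-q x) - q x exp (-q x)) / x ^ 2` and symmetrise
the resulting double integral. For the kernel `2` the desingularised Laplace transform
`Q q = ∫ (1 - exp (-q x)) φ x dx` then satisfies `Q - q Q' = Q ^ 2`, a Riccati equation for `Q / q`
whose normalised solution is `Q q = q / (1 + q)`. The kernel `2 + ε W` adds an error of order `ε`,
and the Riccati equation is stable, so `Q` converges to `q / (1 + q)` as `ε → 0`.

The Laplace transforms of `φ x dx` at the integers are the moments of its image under
`x ↦ exp (-x)`, so these images converge weakly to the uniform distribution on `[0, 1]`: the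
profiles converge to `exp (-x) dx` as measures. Moreover, since more than the fraction `(1 + α) / 2`
of the mass eventually stays away from `0`, testing with `x ^ (-2 - α)` bounds the moment of order
`-α` uniformly, which makes the contribution of `ε W` to the right-hand side of the profile equation
negligible. The remaining part is twice the integral of `y` over `y < x < y + z`, which passes to
the limit under weak convergence. Hence the right-hand side converges at every `x`, and so does `φ`.
-/

open scoped Topology ENNReal

/-! ### Weak convergence through moments -/

theorem integrable_of_continuous_of_ae_mem_Icc {E : Type*} [NormedAddCommGroup E] {σ : Measure ℝ}
    [IsFiniteMeasure σ] {a b : ℝ} (hσ : ∀ᵐ u ∂σ, u ∈ Icc a b) {f : ℝ → E} (hf : Continuous f) :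
    Integrable f σ := by
  obtain ⟨C, hC⟩ := isCompact_Icc.exists_bound_of_continuousOn (hf.continuousOn (s := Icc a b))
  exact .of_bound hf.aestronglyMeasurable C (hσ.mono fun u hu ↦ hC u hu)

theorem integral_eval_polynomial {σ : Measure ℝ} (hσ : ∀ n : ℕ, Integrable (· ^ n) σ)
    (p : Polynomial ℝ) :
    ∫ u, p.eval u ∂σ = ∑ n ∈ p.support, p.coeff n * ∫ u, u ^ n ∂σ := by
  simp only [Polynomial.eval_eq_sum, Polynomial.sum]
  rw [integral_finsetSum _ fun n _ ↦ (hσ n).const_mul _]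
  simp only [integral_const_mul]

theorem tendsto_finiteMeasure_of_tendsto_moments {ι : Type*} {L : Filter ι} {a b : ℝ}
    {ν : ι → FiniteMeasure ℝ} {ν₀ : FiniteMeasure ℝ}
    (hν : ∀ i, ∀ᵐ u ∂(ν i : Measure ℝ), u ∈ Icc a b) (hν₀ : ∀ᵐ u ∂(ν₀ : Measure ℝ), u ∈ Icc a b)
    (h : ∀ n : ℕ, Tendsto (fun i ↦ ∫ u, u ^ n ∂(ν i : Measure ℝ)) L
      (𝓝 (∫ u, u ^ n ∂(ν₀ : Measure ℝ)))) :
    Tendsto ν L (𝓝 ν₀) := by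
  have polynomial (p : Polynomial ℝ) : Tendsto (fun i ↦ ∫ u, p.eval u ∂(ν i : Measure ℝ)) L
      (𝓝 (∫ u, p.eval u ∂(ν₀ : Measure ℝ))) := by
    simp only [integral_eval_polynomial fun n ↦
      integrable_of_continuous_of_ae_mem_Icc (hν _) (continuous_pow n),
      integral_eval_polynomial fun n ↦
        integrable_of_continuous_of_ae_mem_Icc hν₀ (continuous_pow n)]
    exact tendsto_finsetSum _ fun n _ ↦ (h n).const_mul _
  have mass : Tendsto (fun i ↦ (ν i : Measure ℝ).real univ) L (𝓝 ((ν₀ : Measure ℝ).real univ)) := by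
    simpa using h 0
  refine FiniteMeasure.tendsto_iff_forall_integral_tendsto.mpr fun f ↦
    Metric.tendsto_nhds.mpr fun η hη ↦ ?_
  set M := (ν₀ : Measure ℝ).real univ + 1
  have hM₀ : 0 < M := by positivity
  obtain ⟨p, hp⟩ := exists_polynomial_near_of_continuousOn a b f f.continuous.continuousOn
    (η / (3 * M)) (by positivity)
  have near {σ : FiniteMeasure ℝ} (hσ : ∀ᵐ u ∂(σ : Measure ℝ), u ∈ Icc a b)
      (hσM : (σ : Measure ℝ).real univ ≤ M) :
      |∫ u, p.eval u ∂(σ : Measure ℝ) - ∫ u, f u ∂(σ : Measure ℝ)| ≤ η / 3 := by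
    rw [← integral_sub (integrable_of_continuous_of_ae_mem_Icc hσ (by fun_prop))
      (integrable_of_continuous_of_ae_mem_Icc hσ f.continuous)]
    calc |∫ u, (p.eval u - f u) ∂(σ : Measure ℝ)|
        ≤ η / (3 * M) * (σ : Measure ℝ).real univ :=
          (norm_eq_abs _).symm.trans_le
            (norm_integral_le_of_norm_le_const (hσ.mono fun u hu ↦ (hp u hu).le))
      _ ≤ η / (3 * M) * M := by gcongr
      _ = η / 3 := by field_simp
  filter_upwards [mass.eventually_le_const (lt_add_one _),
    Metric.tendsto_nhds.mp (polynomial p) (η / 3) (by positivity)] with i hi hpi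
  have h₁ := near (hν i) hi
  have h₂ := near hν₀ (lt_add_one _).le
  rw [Real.dist_eq] at hpi ⊢
  grind

theorem tendsto_prod_self_of_null_frontier {ι Ω : Type*} {L : Filter ι} [MeasurableSpace Ω]
    [TopologicalSpace Ω] [TopologicalSpace.PseudoMetrizableSpace Ω] [SecondCountableTopology Ω]
    [BorelSpace Ω] {ν : ι → FiniteMeasure Ω} {ν₀ : FiniteMeasure Ω} (hν₀ : ν₀ ≠ 0)
    (h : Tendsto ν L (𝓝 ν₀)) {E : Set (Ω × Ω)}
    (hE : (ν₀ : Measure Ω).prod ν₀ (frontier E) = 0) :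
    Tendsto (fun i ↦ (ν i : Measure Ω).prod (ν i) E) L (𝓝 ((ν₀ : Measure Ω).prod ν₀ E)) := by
  have : Nonempty Ω := by
    by_contra hΩ
    rw [not_nonempty_iff] at hΩ
    exact hν₀ (FiniteMeasure.eq_of_forall_apply_eq _ _ fun s _ ↦ by
      simp [Set.eq_empty_of_isEmpty s])
  have scale (σ : FiniteMeasure Ω) : (σ : Measure Ω).prod σ = (σ.mass : ℝ≥0∞) •
      (σ.mass : ℝ≥0∞) • (σ.normalize : Measure Ω).prod (σ.normalize : Measure Ω) := by
    have hσ : (σ : Measure Ω) = (σ.mass : ℝ≥0∞) • (σ.normalize : Measure Ω) :=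
      congrArg _ σ.self_eq_mass_smul_normalize
    nth_rewrite 1 2 [hσ]
    rw [Measure.prod_smul_left, Measure.prod_smul_right]
  have mass : Tendsto (fun i ↦ ((ν i).mass : ℝ≥0∞)) L (𝓝 ν₀.mass) :=
    ENNReal.tendsto_coe.mpr h.mass
  have normalized := FiniteMeasure.tendsto_normalize_of_tendsto h hν₀
  have prod := (ProbabilityMeasure.continuous_prod.tendsto (ν₀.normalize, ν₀.normalize)).comp
    (normalized.prodMk_nhds normalized)
  have hE' : (ν₀.normalize : Measure Ω).prod (ν₀.normalize : Measure Ω) (frontier E) = 0 := by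
    simpa [scale, show (ν₀ : Measure Ω) ≠ 0 from fun h₀ ↦ hν₀ (Subtype.ext h₀)] using hE
  have lim := ProbabilityMeasure.tendsto_measure_of_null_frontier_of_tendsto' prod hE'
  simp only [scale, Measure.smul_apply, smul_eq_mul]
  exact ENNReal.Tendsto.mul mass (.inr <| by finiteness)
    (ENNReal.Tendsto.mul mass (.inr <| by finiteness) lim (.inr ENNReal.coe_ne_top))
    (.inr ENNReal.coe_ne_top)

/-- The points `(u, v)` with `a < u < b` and `u v < a`. For `a = exp (-x)` and `b = exp (-s)` this
is the set `s < y < x < y + z` in the coordinates `u = exp (-y)`, `v = exp (-z)`. -/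
def hyperbolicStrip (a b : ℝ) : Set (ℝ × ℝ) := {p | a < p.1 ∧ p.1 < b ∧ p.1 * p.2 < a}

theorem isOpen_hyperbolicStrip (a b : ℝ) : IsOpen (hyperbolicStrip a b) :=
  (isOpen_lt continuous_const continuous_fst).inter
    ((isOpen_lt continuous_fst continuous_const).inter
      (isOpen_lt (continuous_fst.mul continuous_snd) continuous_const))

theorem measure_frontier_hyperbolicStrip {ν : Measure ℝ} [SFinite ν] [NullSingletonClass ν] {a : ℝ}
    (ha : 0 < a) (b : ℝ) : ν.prod ν (frontier (hyperbolicStrip a b)) = 0 := by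
  have vertical (c : ℝ) : ν.prod ν {p | p.1 = c} = 0 := by
    rw [show {p : ℝ × ℝ | p.1 = c} = {c} ×ˢ univ by ext; simp, Measure.prod_prod]
    simp
  have hyperbola : ν.prod ν {p | p.1 * p.2 = a} = 0 := by
    refine (Measure.measure_prod_null
      (measurableSet_eq_fun (by fun_prop) measurable_const)).mpr (ae_of_all _ fun y ↦ ?_)
    refine measure_mono_null (t := {a / y}) (fun z (hz : y * z = a) ↦ ?_) (measure_singleton _)
    have hy : y ≠ 0 := by rintro rfl; simp [ha.ne] at hz
    exact (eq_div_iff hy).mpr (by linarith)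
  have hclosed : IsClosed {p : ℝ × ℝ | a ≤ p.1 ∧ p.1 ≤ b ∧ p.1 * p.2 ≤ a} :=
    (isClosed_le continuous_const continuous_fst).inter
      ((isClosed_le continuous_fst continuous_const).inter
        (isClosed_le (continuous_fst.mul continuous_snd) continuous_const))
  have hsub : hyperbolicStrip a b ⊆ {p : ℝ × ℝ | a ≤ p.1 ∧ p.1 ≤ b ∧ p.1 * p.2 ≤ a} :=
    fun p hp ↦ ⟨hp.1.le, hp.2.1.le, hp.2.2.le⟩
  refine measure_mono_null (fun p hp ↦ ?_)
    (measure_union_null (vertical a) (measure_union_null (vertical b) hyperbola))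
  rw [(isOpen_hyperbolicStrip a b).frontier_eq] at hp
  obtain ⟨h₁, h₂, h₃⟩ := closure_minimal hsub hclosed hp.1
  by_contra hne
  simp only [mem_union, mem_ofPred_eq, not_or] at hne
  exact hp.2 ⟨h₁.lt_of_ne' hne.1, h₂.lt_of_ne hne.2.1, h₃.lt_of_ne hne.2.2⟩

theorem prod_volume_restrict_Icc_hyperbolicStrip {a b : ℝ} (ha : 0 < a) (hab : a ≤ b) (hb : b ≤ 1) :
    (volume.restrict (Icc (0 : ℝ) 1)).prod (volume.restrict (Icc 0 1)) (hyperbolicStrip a b) =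
      ENNReal.ofReal (a * log (b / a)) := by
  have section_eq {u : ℝ} : volume.restrict (Icc (0 : ℝ) 1) (Prod.mk u ⁻¹' hyperbolicStrip a b) =
      (Ioo a b).indicator (fun u ↦ ENNReal.ofReal (a / u)) u := by
    by_cases hu : u ∈ Ioo a b
    · have hu₀ : 0 < u := ha.trans hu.1
      have : Prod.mk u ⁻¹' hyperbolicStrip a b = Iio (a / u) := by
        ext v
        simp [hyperbolicStrip, hu.1, hu.2, lt_div_iff₀' hu₀]
      rw [indicator_of_mem hu, this, Measure.restrict_apply measurableSet_Iio]
      have : Iio (a / u) ∩ Icc 0 1 = Ico 0 (a / u) := by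
        ext v
        have : a / u < 1 := (div_lt_one hu₀).mpr hu.1
        simp only [mem_inter_iff, mem_Iio, mem_Icc, mem_Ico]
        grind
      simp [this]
    · have : Prod.mk u ⁻¹' hyperbolicStrip a b = ∅ := by
        ext v
        simp only [hyperbolicStrip, mem_preimage, mem_ofPred_eq, mem_empty_iff_false, iff_false]
        exact fun h ↦ hu ⟨h.1, h.2.1⟩
      simp [this, hu]
  have hsub : Ioo a b ⊆ Icc 0 1 := fun u hu ↦ ⟨(ha.trans hu.1).le, hu.2.le.trans hb⟩
  rw [Measure.prod_apply (isOpen_hyperbolicStrip a b).measurableSet]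
  simp only [section_eq]
  rw [lintegral_indicator measurableSet_Ioo, Measure.restrict_restrict measurableSet_Ioo,
    inter_eq_left.mpr hsub, ← ofReal_integral_eq_lintegral_ofReal,
    ← integral_Ioc_eq_integral_Ioo, ← intervalIntegral.integral_of_le hab]
  · simp only [div_eq_mul_inv, intervalIntegral.integral_const_mul]
    rw [integral_inv_of_pos ha (ha.trans_le hab), div_eq_mul_inv]
  · refine (ContinuousOn.integrableOn_Icc (continuousOn_const.div continuousOn_id ?_)).mono_set
      Ioo_subset_Icc_self
    exact fun u hu ↦ (ha.trans_le hu.1).ne'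
  · exact ae_restrict_of_forall_mem measurableSet_Ioo fun u hu ↦ (div_pos ha (ha.trans hu.1)).le

/-- The pairs `y < x < y + z`, over which the profile equation at `x` integrates: a cluster of size
`y` below `x` that jumps across `x` by merging with one of size `z`. -/
def crossing (x : ℝ) : Set (ℝ × ℝ) := {q | q.1 < x ∧ x < q.1 + q.2}

theorem isOpen_crossing (x : ℝ) : IsOpen (crossing x) :=
  (isOpen_lt continuous_fst continuous_const).inter
    (isOpen_lt continuous_const (continuous_fst.add continuous_snd))

theorem measurableSet_crossing (x : ℝ) : MeasurableSet (crossing x) :=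
  (isOpen_crossing x).measurableSet

theorem tendsto_map_exp_neg_prod_self {ι : Type*} {L : Filter ι} {μ : ι → Measure ℝ}
    [∀ i, IsFiniteMeasure (μ i)] (hpos : ∀ i, ∀ᵐ x ∂μ i, 0 < x)
    (hμ : ∀ n : ℕ, Tendsto (fun i ↦ ∫ x, exp (-(n * x)) ∂μ i) L (𝓝 (1 / (n + 1))))
    {E : Set (ℝ × ℝ)}
    (hE : (volume.restrict (Icc 0 1)).prod (volume.restrict (Icc 0 1)) (frontier E) = 0) :
    Tendsto (fun i ↦ ((μ i).map fun x ↦ exp (-x)).prod ((μ i).map fun x ↦ exp (-x)) E) L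
      (𝓝 ((volume.restrict (Icc 0 1)).prod (volume.restrict (Icc 0 1)) E)) := by
  let ν (i : ι) : FiniteMeasure ℝ := ⟨(μ i).map fun x ↦ exp (-x), inferInstance⟩
  let uniform : FiniteMeasure ℝ := ⟨volume.restrict (Icc 0 1), inferInstance⟩
  have hexp : Measurable fun x : ℝ ↦ exp (-x) := by fun_prop
  have uniform_moment (n : ℕ) : ∫ u in Icc (0 : ℝ) 1, u ^ n = 1 / (n + 1) := by
    rw [integral_Icc_eq_integral_Ioc, ← intervalIntegral.integral_of_le zero_le_one]
    simp
  have moment (n : ℕ) (i : ι) : ∫ u, u ^ n ∂(μ i).map (fun x ↦ exp (-x)) =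
      ∫ x, exp (-(n * x)) ∂μ i := by
    simp only [integral_map hexp.aemeasurable (by fun_prop : AEStronglyMeasurable (· ^ n) _),
      ← exp_nat_mul, mul_neg]
  have weak : Tendsto ν L (𝓝 uniform) := by
    refine tendsto_finiteMeasure_of_tendsto_moments (a := 0) (b := 1) (fun i ↦ ?_)
      (ae_restrict_mem measurableSet_Icc) fun n ↦ ?_
    · refine (ae_map_iff hexp.aemeasurable measurableSet_Icc).mpr ((hpos i).mono fun x hx ↦ ?_)
      exact ⟨(exp_pos _).le, exp_le_one_iff.mpr (by linarith)⟩
    · simpa only [ν, uniform, FiniteMeasure.toMeasure_mk, moment, uniform_moment] using hμ n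
  have uniform_ne : uniform ≠ 0 := fun h₀ ↦ by
    simpa [uniform] using congrArg (fun σ : FiniteMeasure ℝ ↦ (σ : Measure ℝ) univ) h₀
  exact tendsto_prod_self_of_null_frontier uniform_ne weak hE

theorem lintegral_crossing_fst {μ : Measure ℝ} [SFinite μ] (hpos : ∀ᵐ x ∂μ, 0 < x) (x : ℝ) :
    ∫⁻ q in crossing x, ENNReal.ofReal q.1 ∂μ.prod μ =
      ∫⁻ s in Ioo 0 x, (μ.map fun x ↦ exp (-x)).prod (μ.map fun x ↦ exp (-x))
        (hyperbolicStrip (exp (-x)) (exp (-s))) := by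
  have hexp : Measurable fun x : ℝ ↦ exp (-x) := by fun_prop
  have hfst : ∀ᵐ q ∂μ.prod μ, 0 < q.1 := Measure.quasiMeasurePreserving_fst.ae hpos
  have layer (s : ℝ) : (μ.prod μ).restrict (crossing x) {q | s < q.1} =
      (μ.map fun x ↦ exp (-x)).prod (μ.map fun x ↦ exp (-x))
        (hyperbolicStrip (exp (-x)) (exp (-s))) := by
    rw [Measure.map_prod_map _ _ hexp hexp, Measure.map_apply (by fun_prop)
      (isOpen_hyperbolicStrip _ _).measurableSet,
      Measure.restrict_apply (measurableSet_lt measurable_const measurable_fst)]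
    congr 1
    ext q
    simp only [crossing, hyperbolicStrip, mem_inter_iff, mem_preimage, mem_ofPred_eq, Prod.map,
      ← exp_add, exp_lt_exp]
    grind
  rw [lintegral_eq_lintegral_meas_lt _ (ae_restrict_of_ae (hfst.mono fun q hq ↦ hq.le))
    measurable_fst.aemeasurable]
  simp only [layer]
  rw [← Ioi_inter_Iio, inter_comm, ← Measure.restrict_restrict measurableSet_Iio]
  refine (setLIntegral_eq_of_support_subset fun s hs ↦ ?_).symm
  obtain ⟨p, hp⟩ := nonempty_of_measure_ne_zero hs
  simpa using hp.1.trans hp.2.1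

theorem tendsto_lintegral_crossing_fst {ι : Type*} {L : Filter ι} [L.IsCountablyGenerated]
    {μ : ι → Measure ℝ} [∀ i, IsFiniteMeasure (μ i)] (hpos : ∀ i, ∀ᵐ x ∂μ i, 0 < x)
    (hμ : ∀ n : ℕ, Tendsto (fun i ↦ ∫ x, exp (-(n * x)) ∂μ i) L (𝓝 (1 / (n + 1))))
    {x : ℝ} (hx : 0 ≤ x) :
    Tendsto (fun i ↦ ∫⁻ q in crossing x, ENNReal.ofReal q.1 ∂(μ i).prod (μ i)) L
      (𝓝 (ENNReal.ofReal (x ^ 2 / 2 * exp (-x)))) := by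
  set ν : ι → Measure ℝ := fun i ↦ (μ i).map fun x ↦ exp (-x)
  have strip {s : ℝ} (hs : s ∈ Ioo 0 x) :
      Tendsto (fun i ↦ (ν i).prod (ν i) (hyperbolicStrip (exp (-x)) (exp (-s)))) L
        (𝓝 (ENNReal.ofReal (exp (-x) * (x - s)))) := by
    have area := prod_volume_restrict_Icc_hyperbolicStrip (exp_pos (-x))
      (exp_le_exp.mpr (neg_le_neg hs.2.le)) (exp_le_one_iff.mpr (neg_nonpos.mpr hs.1.le))
    rw [← exp_sub, log_exp, neg_sub_neg] at area
    rw [← area]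
    exact tendsto_map_exp_neg_prod_self hpos hμ (measure_frontier_hyperbolicStrip (exp_pos _) _)
  have limit : ENNReal.ofReal (x ^ 2 / 2 * exp (-x)) =
      ∫⁻ s in Ioo 0 x, ENNReal.ofReal (exp (-x) * (x - s)) := by
    rw [← ofReal_integral_eq_lintegral_ofReal, integral_const_mul, ← integral_Ioc_eq_integral_Ioo,
      ← intervalIntegral.integral_of_le hx, intervalIntegral.integral_sub (by simp) (by simp)]
    · simp only [intervalIntegral.integral_const, integral_id, smul_eq_mul]
      ring_nf
    · exact (Continuous.integrableOn_Icc (by fun_prop)).mono_set Ioo_subset_Icc_self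
    · exact ae_restrict_of_forall_mem measurableSet_Ioo fun s hs ↦
        mul_nonneg (exp_pos _).le (sub_nonneg.mpr hs.2.le)
  have mass : ∀ᶠ i in L, (ν i).prod (ν i) univ ≤ 2 := by
    refine (tendsto_map_exp_neg_prod_self hpos hμ (E := univ) (by simp)).eventually_le_const ?_
    rw [← univ_prod_univ, Measure.prod_prod]
    simp
  simp only [lintegral_crossing_fst (hpos _), limit]
  refine tendsto_lintegral_filter_of_dominated_convergence (fun _ ↦ 2) ?_ ?_ ?_ ?_
  · refine Eventually.of_forall fun i ↦ Antitone.measurable fun s t hst ↦ measure_mono fun p hp ↦ ?_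
    exact ⟨hp.1, hp.2.1.trans_le (exp_le_exp.mpr (neg_le_neg hst)), hp.2.2⟩
  · exact mass.mono fun i hi ↦ ae_of_all _ fun s ↦ (measure_mono (subset_univ _)).trans hi
  · simpa only [setLIntegral_const] using ENNReal.mul_ne_top (by simp) measure_Ioo_lt_top.ne
  · exact ae_restrict_of_forall_mem measurableSet_Ioo fun s hs ↦ strip hs

/-! ### The desingularised Laplace transform -/

/-- A symmetric kernel `K` on `(0,∞)²` squeezed between `2` and
`2 + ε ((y / z) ^ α + (z / y) ^ α)`: the only features of the kernels `2 + ε W` that matter. -/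
structure IsNearConstant (α ε : ℝ) (K : ℝ → ℝ → ℝ) : Prop where
  measurable : Measurable ((Ioi 0 ×ˢ Ioi 0).indicator (Function.uncurry K))
  symm : ∀ ⦃y z : ℝ⦄, 0 < y → 0 < z → K y z = K z y
  two_le : ∀ ⦃y z : ℝ⦄, 0 < y → 0 < z → 2 ≤ K y z
  le : ∀ ⦃y z : ℝ⦄, 0 < y → 0 < z → K y z ≤ 2 + ε * ((y / z) ^ α + (z / y) ^ α)

/-- A measure on `(0,∞)` of first moment one that solves the profile equation tested against
arbitrary `ψ ≥ 0`. On the right `x` runs over `y < x < y + z`, which is the domain of the double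
integral in the profile equation read as a condition on `x`. -/
structure IsWeakProfile (K : ℝ → ℝ → ℝ) (μ : Measure ℝ) : Prop where
  ae_pos : ∀ᵐ x ∂μ, 0 < x
  first_moment : ∫⁻ x, ENNReal.ofReal x ∂μ = 1
  weak : ∀ ψ : ℝ → ℝ≥0∞, Measurable ψ → ∫⁻ x, ψ x * ENNReal.ofReal (x ^ 2) ∂μ =
    ∫⁻ p, ENNReal.ofReal (p.1 * K p.1 p.2) * (∫⁻ x in Ioo p.1 (p.1 + p.2), ψ x) ∂μ.prod μ

/-- The desingularised Laplace transform of a measure on `(0,∞)`. It is finite as soon as the first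
moment is, whereas the Laplace transform itself needs a finite mass. -/
noncomputable def desingularizedLaplace (μ : Measure ℝ) (q : ℝ) : ℝ := ∫ x, (1 - exp (-(q * x))) ∂μ

theorem ae_prod_pos {μ : Measure ℝ} (hμ : ∀ᵐ x ∂μ, 0 < x) :
    ∀ᵐ p ∂μ.prod μ, 0 < p.1 ∧ 0 < p.2 :=
  (Measure.quasiMeasurePreserving_fst.ae hμ).and (Measure.quasiMeasurePreserving_snd.ae hμ)

theorem two_mul_lintegral_prod_self {Ω : Type*} [MeasurableSpace Ω] {μ : Measure Ω} [SFinite μ]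
    {G : Ω × Ω → ℝ≥0∞} (hG : AEMeasurable G (μ.prod μ)) :
    2 * ∫⁻ p, G p ∂μ.prod μ = ∫⁻ p, G p + G p.swap ∂μ.prod μ := by
  rw [lintegral_add_left' hG, lintegral_prod_swap, two_mul]

theorem setLIntegral_Ioo_ofReal_of_hasDerivAt {a b : ℝ} (hab : a ≤ b) {F f : ℝ → ℝ}
    (hF : ∀ x ∈ Icc a b, HasDerivAt F (f x) x) (hf : ContinuousOn f (Icc a b))
    (hf₀ : ∀ x ∈ Icc a b, 0 ≤ f x) :
    ∫⁻ x in Ioo a b, ENNReal.ofReal (f x) = ENNReal.ofReal (F b - F a) := by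
  rw [← uIcc_of_le hab] at hF hf
  rw [← intervalIntegral.integral_eq_sub_of_hasDerivAt hF hf.intervalIntegrable,
    intervalIntegral.integral_of_le hab, integral_Ioc_eq_integral_Ioo,
    ofReal_integral_eq_lintegral_ofReal]
  · exact (uIcc_of_le hab ▸ hf).integrableOn_Icc.mono_set Ioo_subset_Icc_self
  · exact ae_restrict_of_forall_mem measurableSet_Ioo fun x hx ↦ hf₀ x (Ioo_subset_Icc_self hx)

theorem lintegral_mul_cross_rpow {μ : Measure ℝ} [SFinite μ] (hμ : ∀ᵐ x ∂μ, 0 < x) (α : ℝ)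
    {F : ℝ → ℝ≥0∞} (hF : Measurable F) :
    ∫⁻ p, F p.1 * F p.2 * ENNReal.ofReal ((p.1 / p.2) ^ α + (p.2 / p.1) ^ α) ∂μ.prod μ =
      2 * ((∫⁻ x, F x * ENNReal.ofReal (x ^ α) ∂μ) *
        ∫⁻ x, F x * ENNReal.ofReal (x ^ (-α)) ∂μ) := by
  rw [← lintegral_prod_mul (by fun_prop) (by fun_prop), two_mul_lintegral_prod_self (by fun_prop)]
  refine lintegral_congr_ae ((ae_prod_pos hμ).mono fun p ⟨hy, hz⟩ ↦ ?_)
  have split {y z : ℝ} (hy : 0 < y) (hz : 0 < z) : (y / z) ^ α = y ^ α * z ^ (-α) := by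
    rw [div_rpow hy.le hz.le, rpow_neg hz.le, div_eq_mul_inv]
  simp only [Prod.fst_swap, Prod.snd_swap]
  rw [ENNReal.ofReal_add (by positivity) (by positivity), split hy hz, split hz hy,
    ENNReal.ofReal_mul (by positivity), ENNReal.ofReal_mul (by positivity)]
  ring

theorem mul_exp_neg_le_one_sub_exp_neg (t : ℝ) : t * exp (-t) ≤ 1 - exp (-t) := by
  have h := mul_le_mul_of_nonneg_right (add_one_le_exp t) (exp_pos (-t)).le
  rw [← exp_add, add_neg_cancel, exp_zero] at h
  linarith

theorem one_sub_exp_neg_le (t : ℝ) : 1 - exp (-t) ≤ t := by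
  linarith [add_one_le_exp (-t)]

theorem one_sub_exp_neg_nonneg {t : ℝ} (ht : 0 ≤ t) : 0 ≤ 1 - exp (-t) := by
  simpa using ht

theorem hasDerivAt_one_sub_exp_neg_mul (q x : ℝ) :
    HasDerivAt (fun q ↦ 1 - exp (-(q * x))) (x * exp (-(q * x))) q :=
  (((hasDerivAt_id q).mul_const x).neg.exp.const_sub 1).congr_deriv (by simp [mul_comm])

theorem hasDerivAt_neg_one_sub_exp_neg_mul_div (q : ℝ) {x : ℝ} (hx : x ≠ 0) :
    HasDerivAt (fun x ↦ -((1 - exp (-(q * x))) / x))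
      ((1 - exp (-(q * x)) - q * x * exp (-(q * x))) / x ^ 2) x := by
  have h := hasDerivAt_one_sub_exp_neg_mul x q
  simp only [mul_comm _ q] at h
  refine (h.fun_div (hasDerivAt_id' x) hx).neg.congr_deriv ?_
  ring

theorem one_sub_exp_neg_mul_div_add_le (q : ℝ) {y z : ℝ} (hy : 0 < y) (hz : 0 < z) :
    (1 - exp (-(q * (y + z)))) / (y + z) ≤ (1 - exp (-(q * y))) / y := by
  have mono : MonotoneOn (fun x ↦ -((1 - exp (-(q * x))) / x)) (Ioi 0) := by
    refine monotoneOn_of_hasDerivWithinAt_nonneg (convex_Ioi 0)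
      (f' := fun x ↦ (1 - exp (-(q * x)) - q * x * exp (-(q * x))) / x ^ 2) (fun x hx ↦
      (hasDerivAt_neg_one_sub_exp_neg_mul_div q (ne_of_gt hx)).continuousAt.continuousWithinAt)
      (fun x hx ↦ ?_) fun x _ ↦
      div_nonneg (sub_nonneg.mpr (mul_exp_neg_le_one_sub_exp_neg _)) (sq_nonneg x)
    rw [interior_Ioi] at hx
    exact (hasDerivAt_neg_one_sub_exp_neg_mul_div q (ne_of_gt hx)).hasDerivWithinAt
  exact neg_le_neg_iff.mp (mono hy (add_pos hy hz : 0 < y + z) (by linarith))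

theorem setLIntegral_neg_deriv_one_sub_exp_neg_mul_div (q : ℝ) {y z : ℝ} (hy : 0 < y)
    (hz : 0 ≤ z) :
    ∫⁻ x in Ioo y (y + z), ENNReal.ofReal ((1 - exp (-(q * x)) - q * x * exp (-(q * x))) / x ^ 2) =
      ENNReal.ofReal ((1 - exp (-(q * y))) / y - (1 - exp (-(q * (y + z)))) / (y + z)) := by
  have ne_zero : ∀ x ∈ Icc y (y + z), x ≠ 0 := fun x hx ↦ (hy.trans_le hx.1).ne'
  rw [setLIntegral_Ioo_ofReal_of_hasDerivAt (le_add_of_nonneg_right hz)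
    (fun x hx ↦ hasDerivAt_neg_one_sub_exp_neg_mul_div q (ne_zero x hx)) ?_ fun x _ ↦
      div_nonneg (sub_nonneg.mpr (mul_exp_neg_le_one_sub_exp_neg _)) (sq_nonneg x), neg_sub_neg]
  exact ContinuousOn.div (by fun_prop) (by fun_prop) fun x hx ↦ pow_ne_zero 2 (ne_zero x hx)

theorem one_sub_exp_neg_le_rpow {s t : ℝ} (ht : 0 ≤ t) (hs : s ∈ Icc 0 1) :
    1 - exp (-t) ≤ t ^ s := by
  rcases le_total t 1 with ht₁ | ht₁
  · exact (one_sub_exp_neg_le t).trans (self_le_rpow_of_le_one ht ht₁ hs.2)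
  · linarith [one_le_rpow ht₁ hs.1, exp_pos (-t)]

theorem rpow_le_one_add {s x : ℝ} (hx : 0 ≤ x) (hs : s ∈ Icc 0 1) : x ^ s ≤ 1 + x := by
  rcases le_total x 1 with hx₁ | hx₁
  · linarith [rpow_le_one hx hx₁ hs.1]
  · linarith [rpow_le_self_of_one_le hx₁ hs.2]

theorem le_of_tendsto_nhdsGT_of_hasDerivAt_nonpos {f f' : ℝ → ℝ} {a c x : ℝ} (hx : a < x)
    (hf : ∀ y > a, HasDerivAt f (f' y) y) (hf' : ∀ y > a, f' y ≤ 0)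
    (hlim : Tendsto f (𝓝[>] a) (𝓝 c)) : f x ≤ c := by
  have anti : AntitoneOn f (Ioi a) := by
    refine antitoneOn_of_hasDerivWithinAt_nonpos (f' := f') (convex_Ioi a)
      (fun y hy ↦ (hf y hy).continuousAt.continuousWithinAt) ?_ ?_ <;> rw [interior_Ioi]
    exacts [fun y hy ↦ (hf y hy).hasDerivWithinAt, hf']
  exact ge_of_tendsto hlim <| mem_of_superset (Ioo_mem_nhdsGT hx) fun y hy ↦
    anti hy.1 hx hy.2.le

theorem sq_sub_inv_one_add_le_of_riccati {α M : ℝ} (hα : α < 1) {g r : ℝ → ℝ}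
    (hg : ∀ q > 0, HasDerivAt g (-(g q ^ 2 + r q)) q) (hg_mem : ∀ q > 0, g q ∈ Icc 0 1)
    (hlim : Tendsto g (𝓝[>] 0) (𝓝 1)) (hr : ∀ q > 0, r q ∈ Icc 0 (M * q ^ (-α)))
    {q : ℝ} (hq : 0 < q) :
    (g q - (1 + q)⁻¹) ^ 2 ≤ 2 * M / (1 - α) * q ^ (1 - α) := by
  have hα' : 0 < 1 - α := sub_pos.mpr hα
  set k : ℝ → ℝ := fun q ↦ (1 + q)⁻¹ with hk
  have hk_deriv : ∀ q > 0, HasDerivAt k (-k q ^ 2) q := fun q hq ↦ by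
    simpa [hk, inv_pow, neg_div] using ((hasDerivAt_id q).const_add 1).fun_inv (by positivity)
  have hk_lim : Tendsto k (𝓝[>] 0) (𝓝 1) := by
    have : ContinuousAt k 0 := by fun_prop (disch := norm_num)
    simpa [hk] using this.tendsto.mono_left nhdsWithin_le_nhds
  have hpow_lim : Tendsto (fun q : ℝ ↦ 2 * M / (1 - α) * q ^ (1 - α)) (𝓝[>] 0) (𝓝 0) := by
    have := (continuousAt_rpow_const 0 (1 - α) (.inr hα'.le)).const_mul (2 * M / (1 - α))
    simpa [zero_rpow hα'.ne'] using this.tendsto.mono_left nhdsWithin_le_nhds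
  have hpow_deriv : ∀ q > 0, HasDerivAt (fun q : ℝ ↦ 2 * M / (1 - α) * q ^ (1 - α))
      (2 * (M * q ^ (-α))) q := fun q hq ↦ by
    refine ((hasDerivAt_rpow_const (p := 1 - α) (.inl hq.ne')).const_mul
      (2 * M / (1 - α))).congr_deriv ?_
    rw [sub_sub_cancel_left]
    field_simp
  refine sub_nonpos.mp (le_of_tendsto_nhdsGT_of_hasDerivAt_nonpos
    (f := (g - k) ^ 2 - fun q ↦ 2 * M / (1 - α) * q ^ (1 - α)) hq
    (fun q hq ↦ (((hg q hq).sub (hk_deriv q hq)).pow 2).sub (hpow_deriv q hq)) (fun q hq ↦ ?_)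
    (by simpa [Pi.sub_def, Pi.pow_def] using ((hlim.sub hk_lim).pow 2).sub hpow_lim))
  have hkq : k q ∈ Icc 0 1 :=
    ⟨by positivity, inv_le_one_of_one_le₀ (le_add_of_nonneg_right (le_of_lt hq))⟩
  have hg₀ := (hg_mem q hq).1
  obtain ⟨hr₀, hr₁⟩ := hr q hq
  have dissipation : 0 ≤ (g q + k q) * (g q - k q) ^ 2 :=
    mul_nonneg (add_nonneg hg₀ hkq.1) (sq_nonneg _)
  have forcing : (k q - g q) * r q ≤ r q := mul_le_of_le_one_left hr₀ (by linarith [hkq.2])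
  simp only [Pi.sub_apply, Nat.cast_ofNat, Nat.add_one_sub_one, pow_one]
  linarith [show 2 * (g q - k q) * (-(g q ^ 2 + r q) - -k q ^ 2) =
    2 * ((k q - g q) * r q) - 2 * ((g q + k q) * (g q - k q) ^ 2) by ring]

namespace IsNearConstant

variable {α ε : ℝ} {K : ℝ → ℝ → ℝ}

theorem nonneg (hK : IsNearConstant α ε K) : 0 ≤ ε := by
  have h := (hK.two_le one_pos one_pos).trans (hK.le one_pos one_pos)
  norm_num at h
  linarith

theorem aemeasurable (hK : IsNearConstant α ε K) {μ : Measure ℝ}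
    (hμ : ∀ᵐ x ∂μ, 0 < x) : AEMeasurable (fun p ↦ K p.1 p.2) (μ.prod μ) :=
  hK.measurable.aemeasurable.congr <| (ae_prod_pos hμ).mono fun p hp ↦
    indicator_of_mem (s := Ioi 0 ×ˢ Ioi 0) (a := p) hp (Function.uncurry K)

end IsNearConstant

namespace IsWeakProfile

variable {α ε : ℝ} {K : ℝ → ℝ → ℝ} {μ : Measure ℝ}

theorem two_mul_lintegral_eq [SFinite μ] (hμ : IsWeakProfile K μ) (hK : IsNearConstant α ε K)
    (q : ℝ) :
    2 * ∫⁻ x, ENNReal.ofReal (1 - exp (-(q * x)) - q * x * exp (-(q * x))) ∂μ =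
      ∫⁻ p, ENNReal.ofReal (K p.1 p.2 * ((1 - exp (-(q * p.1))) * (1 - exp (-(q * p.2)))))
        ∂μ.prod μ := by
  let Φ (x : ℝ) : ℝ := (1 - exp (-(q * x))) / x
  have tested := hμ.weak
    (fun x ↦ ENNReal.ofReal ((1 - exp (-(q * x)) - q * x * exp (-(q * x))) / x ^ 2)) (by fun_prop)
  have lhs : ∫⁻ x, ENNReal.ofReal ((1 - exp (-(q * x)) - q * x * exp (-(q * x))) / x ^ 2) *
      ENNReal.ofReal (x ^ 2) ∂μ =
      ∫⁻ x, ENNReal.ofReal (1 - exp (-(q * x)) - q * x * exp (-(q * x))) ∂μ :=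
    lintegral_congr_ae <| hμ.ae_pos.mono fun x hx ↦ by
      beta_reduce
      rw [← ENNReal.ofReal_mul' (sq_nonneg x), div_mul_cancel₀ _ (by positivity)]
  have rhs : 2 * ∫⁻ x, ENNReal.ofReal (1 - exp (-(q * x)) - q * x * exp (-(q * x))) ∂μ =
      2 * ∫⁻ p, ENNReal.ofReal (p.1 * K p.1 p.2 * (Φ p.1 - Φ (p.1 + p.2))) ∂μ.prod μ := by
    rw [← lhs, tested]
    refine congrArg _ (lintegral_congr_ae <| (ae_prod_pos hμ.ae_pos).mono fun p ⟨hy, hz⟩ ↦ ?_)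
    have hKp := zero_le_two.trans (hK.two_le hy hz)
    simp only [setLIntegral_neg_deriv_one_sub_exp_neg_mul_div q hy hz.le]
    exact (ENNReal.ofReal_mul (by positivity)).symm
  have hKm := hK.aemeasurable hμ.ae_pos
  rw [rhs, two_mul_lintegral_prod_self (by fun_prop)]
  refine lintegral_congr_ae ((ae_prod_pos hμ.ae_pos).mono fun p ⟨hy, hz⟩ ↦ ?_)
  have hKp := zero_le_two.trans (hK.two_le hy hz)
  have decrease {y z : ℝ} (hy : 0 < y) (hz : 0 < z) : 0 ≤ Φ y - Φ (y + z) :=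
    sub_nonneg.mpr (one_sub_exp_neg_mul_div_add_le q hy hz)
  simp only [Prod.fst_swap, Prod.snd_swap]
  rw [hK.symm hz hy, ← ENNReal.ofReal_add (mul_nonneg (by positivity) (decrease hy hz))
    (mul_nonneg (by positivity) (decrease hz hy))]
  congr 1
  simp only [Φ, add_comm p.2 p.1, mul_add, neg_add, exp_add]
  field_simp
  ring

theorem integrable_id (hμ : IsWeakProfile K μ) : Integrable (fun x ↦ x) μ := by
  refine (lintegral_ofReal_ne_top_iff_integrable (by fun_prop) ?_).mp ?_
  · exact hμ.ae_pos.mono fun x hx ↦ hx.le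
  · simp [hμ.first_moment]

theorem integral_id (hμ : IsWeakProfile K μ) : ∫ x, x ∂μ = 1 := by
  rw [integral_eq_lintegral_of_nonneg_ae (hμ.ae_pos.mono fun x hx ↦ hx.le) (by fun_prop),
    hμ.first_moment, ENNReal.toReal_one]

theorem ae_one_sub_exp_neg_nonneg (hμ : IsWeakProfile K μ) {q : ℝ} (hq : 0 ≤ q) :
    ∀ᵐ x ∂μ, 0 ≤ 1 - exp (-(q * x)) :=
  hμ.ae_pos.mono fun _ hx ↦ one_sub_exp_neg_nonneg (by positivity)

theorem integrable_one_sub_exp_neg (hμ : IsWeakProfile K μ) {q : ℝ} (hq : 0 ≤ q) :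
    Integrable (fun x ↦ 1 - exp (-(q * x))) μ :=
  (hμ.integrable_id.const_mul q).mono' (by fun_prop) <|
    (hμ.ae_one_sub_exp_neg_nonneg hq).mono fun _ hx ↦
      (norm_of_nonneg hx).trans_le (one_sub_exp_neg_le _)

theorem ae_norm_mul_exp_neg_le (hμ : IsWeakProfile K μ) {q : ℝ} (hq : 0 ≤ q) :
    ∀ᵐ x ∂μ, ‖x * exp (-(q * x))‖ ≤ x :=
  hμ.ae_pos.mono fun x hx ↦ by
    rw [norm_of_nonneg (by positivity)]
    exact mul_le_of_le_one_right hx.le (exp_le_one_iff.mpr (by nlinarith))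

theorem hasDerivAt_desingularizedLaplace (hμ : IsWeakProfile K μ) {q : ℝ} (hq : 0 < q) :
    HasDerivAt (desingularizedLaplace μ) (∫ x, x * exp (-(q * x)) ∂μ) q := by
  refine (hasDerivAt_integral_of_dominated_loc_of_deriv_le (Ioi_mem_nhds hq)
    (.of_forall fun _ ↦ by fun_prop) (hμ.integrable_one_sub_exp_neg hq.le) (by fun_prop) ?_
    hμ.integrable_id (ae_of_all _ fun x q' _ ↦ hasDerivAt_one_sub_exp_neg_mul q' x)).2
  filter_upwards [hμ.ae_pos] with x hx q' hq'
  rw [norm_of_nonneg (by positivity)]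
  exact mul_le_of_le_one_right hx.le
    (exp_le_one_iff.mpr (neg_nonpos.mpr (mul_pos hq' hx).le))

theorem desingularizedLaplace_nonneg (hμ : IsWeakProfile K μ) {q : ℝ} (hq : 0 ≤ q) :
    0 ≤ desingularizedLaplace μ q :=
  integral_nonneg_of_ae (hμ.ae_one_sub_exp_neg_nonneg hq)

theorem desingularizedLaplace_le (hμ : IsWeakProfile K μ) {q : ℝ} (hq : 0 ≤ q) :
    desingularizedLaplace μ q ≤ q := by
  calc desingularizedLaplace μ q ≤ ∫ x, q * x ∂μ :=
        integral_mono (hμ.integrable_one_sub_exp_neg hq) (hμ.integrable_id.const_mul q)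
          fun x ↦ one_sub_exp_neg_le _
    _ = q := by rw [integral_const_mul, hμ.integral_id, mul_one]

theorem lintegral_one_sub_exp_neg (hμ : IsWeakProfile K μ) {q : ℝ} (hq : 0 ≤ q) :
    ∫⁻ x, ENNReal.ofReal (1 - exp (-(q * x))) ∂μ = ENNReal.ofReal (desingularizedLaplace μ q) :=
  (ofReal_integral_eq_lintegral_ofReal (hμ.integrable_one_sub_exp_neg hq)
    (hμ.ae_one_sub_exp_neg_nonneg hq)).symm

theorem integrable_mul_mul_exp_neg (hμ : IsWeakProfile K μ) {q : ℝ} (hq : 0 ≤ q) :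
    Integrable (fun x ↦ q * x * exp (-(q * x))) μ := by
  simpa only [mul_assoc] using (hμ.integrable_id.mono' (by fun_prop)
    (hμ.ae_norm_mul_exp_neg_le hq)).const_mul q

theorem integral_one_sub_exp_neg_sub (hμ : IsWeakProfile K μ) {q : ℝ} (hq : 0 ≤ q) :
    ∫ x, (1 - exp (-(q * x)) - q * x * exp (-(q * x))) ∂μ =
      desingularizedLaplace μ q - q * ∫ x, x * exp (-(q * x)) ∂μ := by
  rw [integral_sub (hμ.integrable_one_sub_exp_neg hq) (hμ.integrable_mul_mul_exp_neg hq),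
    desingularizedLaplace]
  simp only [mul_assoc, integral_const_mul]

theorem sub_mul_integral_nonneg (hμ : IsWeakProfile K μ) {q : ℝ} (hq : 0 ≤ q) :
    0 ≤ desingularizedLaplace μ q - q * ∫ x, x * exp (-(q * x)) ∂μ := by
  rw [← hμ.integral_one_sub_exp_neg_sub hq]
  exact integral_nonneg fun x ↦ sub_nonneg.mpr (mul_exp_neg_le_one_sub_exp_neg _)

theorem lintegral_one_sub_exp_neg_sub (hμ : IsWeakProfile K μ) {q : ℝ} (hq : 0 ≤ q) :
    ∫⁻ x, ENNReal.ofReal (1 - exp (-(q * x)) - q * x * exp (-(q * x))) ∂μ =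
      ENNReal.ofReal (desingularizedLaplace μ q - q * ∫ x, x * exp (-(q * x)) ∂μ) := by
  rw [← hμ.integral_one_sub_exp_neg_sub hq]
  exact (ofReal_integral_eq_lintegral_ofReal
    ((hμ.integrable_one_sub_exp_neg hq).sub (hμ.integrable_mul_mul_exp_neg hq))
    (ae_of_all _ fun x ↦ sub_nonneg.mpr (mul_exp_neg_le_one_sub_exp_neg _))).symm

theorem lintegral_prod_one_sub_exp_neg [SFinite μ] (hμ : IsWeakProfile K μ) {q : ℝ} (hq : 0 ≤ q) :
    ∫⁻ p, ENNReal.ofReal (1 - exp (-(q * p.1))) * ENNReal.ofReal (1 - exp (-(q * p.2))) ∂μ.prod μ =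
      ENNReal.ofReal (desingularizedLaplace μ q ^ 2) := by
  rw [lintegral_prod_mul (f := fun x ↦ ENNReal.ofReal (1 - exp (-(q * x))))
    (g := fun x ↦ ENNReal.ofReal (1 - exp (-(q * x)))) (by fun_prop) (by fun_prop),
    hμ.lintegral_one_sub_exp_neg hq, ← ENNReal.ofReal_mul (hμ.desingularizedLaplace_nonneg hq), sq]

theorem sq_desingularizedLaplace_le [SFinite μ] (hμ : IsWeakProfile K μ)
    (hK : IsNearConstant α ε K) {q : ℝ} (hq : 0 ≤ q) :
    desingularizedLaplace μ q ^ 2 ≤ desingularizedLaplace μ q - q * ∫ x, x * exp (-(q * x)) ∂μ := by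
  have h : 2 * ENNReal.ofReal (desingularizedLaplace μ q ^ 2) ≤
      2 * ENNReal.ofReal (desingularizedLaplace μ q - q * ∫ x, x * exp (-(q * x)) ∂μ) := by
    rw [← hμ.lintegral_one_sub_exp_neg_sub hq, hμ.two_mul_lintegral_eq hK,
      ← hμ.lintegral_prod_one_sub_exp_neg hq, ← lintegral_const_mul _ (by fun_prop)]
    refine lintegral_mono_ae ((ae_prod_pos hμ.ae_pos).mono fun p ⟨hy, hz⟩ ↦ ?_)
    have hf₁ : 0 ≤ 1 - exp (-(q * p.1)) := one_sub_exp_neg_nonneg (by positivity)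
    have hf₂ : 0 ≤ 1 - exp (-(q * p.2)) := one_sub_exp_neg_nonneg (by positivity)
    rw [← ENNReal.ofReal_mul hf₁, ← ENNReal.ofReal_ofNat 2, ← ENNReal.ofReal_mul zero_le_two]
    exact ENNReal.ofReal_le_ofReal
      (mul_le_mul_of_nonneg_right (hK.two_le hy hz) (mul_nonneg hf₁ hf₂))
  rw [ENNReal.mul_le_mul_iff_right two_ne_zero ENNReal.ofNat_ne_top] at h
  exact (ENNReal.ofReal_le_ofReal_iff (hμ.sub_mul_integral_nonneg hq)).mp h

theorem measure_univ_le_one [SFinite μ] (hμ : IsWeakProfile K μ) (hK : IsNearConstant α ε K) :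
    μ univ ≤ 1 := by
  have bound {q : ℝ} (hq : 0 ≤ q) : desingularizedLaplace μ q ≤ 1 := by
    have hint : 0 ≤ ∫ x, x * exp (-(q * x)) ∂μ :=
      integral_nonneg_of_ae (hμ.ae_pos.mono fun x hx ↦ by positivity)
    nlinarith [hμ.sq_desingularizedLaplace_le hK hq, mul_nonneg hq hint]
  have exhaust : Tendsto (fun n : ℕ ↦ ∫⁻ x, ENNReal.ofReal (1 - exp (-(n * x))) ∂μ) atTop
      (𝓝 (∫⁻ _, 1 ∂μ)) := by
    refine lintegral_tendsto_of_tendsto_of_monotone (fun n ↦ by fun_prop) ?_ ?_ <;>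
      filter_upwards [hμ.ae_pos] with x hx
    · exact fun m n hmn ↦ by dsimp only; gcongr
    · have h := (tendsto_exp_neg_atTop_nhds_zero.comp
        (tendsto_natCast_atTop_atTop.atTop_mul_const hx)).const_sub 1
      simpa using ENNReal.tendsto_ofReal h
  rw [lintegral_one] at exhaust
  refine le_of_tendsto' exhaust fun n ↦ ?_
  rw [hμ.lintegral_one_sub_exp_neg n.cast_nonneg]
  exact ENNReal.ofReal_le_one.mpr (bound n.cast_nonneg)

theorem measureReal_univ_le_one [SFinite μ] (hμ : IsWeakProfile K μ)
    (hK : IsNearConstant α ε K) : μ.real univ ≤ 1 :=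
  ENNReal.toReal_le_of_le_ofReal zero_le_one (by simpa using hμ.measure_univ_le_one hK)

theorem lintegral_rpow_le_two [SFinite μ] (hμ : IsWeakProfile K μ) (hK : IsNearConstant α ε K)
    {s : ℝ} (hs : s ∈ Icc 0 1) : ∫⁻ x, ENNReal.ofReal (x ^ s) ∂μ ≤ 2 := by
  calc ∫⁻ x, ENNReal.ofReal (x ^ s) ∂μ ≤ ∫⁻ x, (1 + ENNReal.ofReal x) ∂μ :=
        lintegral_mono_ae <| hμ.ae_pos.mono fun x hx ↦ by
          rw [← ENNReal.ofReal_one, ← ENNReal.ofReal_add zero_le_one hx.le]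
          exact ENNReal.ofReal_le_ofReal (rpow_le_one_add hx.le hs)
    _ = μ univ + 1 := by
        rw [lintegral_add_left measurable_const, lintegral_one, hμ.first_moment]
    _ ≤ 2 := by
        rw [← one_add_one_eq_two]
        gcongr
        exact hμ.measure_univ_le_one hK

theorem lintegral_one_sub_exp_neg_mul_rpow_le (hμ : IsWeakProfile K μ) (hα : α ∈ Icc 0 1) {q : ℝ}
    (hq : 0 < q) :
    ∫⁻ x, ENNReal.ofReal (1 - exp (-(q * x))) * ENNReal.ofReal (x ^ α) ∂μ ≤
      ENNReal.ofReal (q ^ (1 - α)) := by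
  calc ∫⁻ x, ENNReal.ofReal (1 - exp (-(q * x))) * ENNReal.ofReal (x ^ α) ∂μ
      ≤ ∫⁻ x, ENNReal.ofReal (q ^ (1 - α)) * ENNReal.ofReal x ∂μ :=
        lintegral_mono_ae <| hμ.ae_pos.mono fun x hx ↦ by
          rw [← ENNReal.ofReal_mul' (by positivity), ← ENNReal.ofReal_mul (by positivity)]
          refine ENNReal.ofReal_le_ofReal ?_
          calc (1 - exp (-(q * x))) * x ^ α ≤ (q * x) ^ (1 - α) * x ^ α := by
                gcongr
                exact one_sub_exp_neg_le_rpow (by positivity)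
                  ⟨sub_nonneg.mpr hα.2, sub_le_self 1 hα.1⟩
            _ = q ^ (1 - α) * x := by
                rw [mul_rpow hq.le hx.le, mul_assoc, ← rpow_add hx, sub_add_cancel, rpow_one]
    _ = ENNReal.ofReal (q ^ (1 - α)) := by
        rw [lintegral_const_mul _ (by fun_prop), hμ.first_moment, mul_one]

theorem lintegral_one_sub_exp_neg_mul_rpow_neg_le [SFinite μ] (hμ : IsWeakProfile K μ)
    (hK : IsNearConstant α ε K) (hα : α ∈ Icc 0 1) {q : ℝ} (hq : 0 ≤ q) :
    ∫⁻ x, ENNReal.ofReal (1 - exp (-(q * x))) * ENNReal.ofReal (x ^ (-α)) ∂μ ≤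
      2 * ENNReal.ofReal q := by
  calc ∫⁻ x, ENNReal.ofReal (1 - exp (-(q * x))) * ENNReal.ofReal (x ^ (-α)) ∂μ
      ≤ ∫⁻ x, ENNReal.ofReal q * ENNReal.ofReal (x ^ (1 - α)) ∂μ :=
        lintegral_mono_ae <| hμ.ae_pos.mono fun x hx ↦ by
          rw [← ENNReal.ofReal_mul' (by positivity), ← ENNReal.ofReal_mul hq]
          refine ENNReal.ofReal_le_ofReal ?_
          calc (1 - exp (-(q * x))) * x ^ (-α) ≤ q * x * x ^ (-α) := by
                gcongr
                exact one_sub_exp_neg_le _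
            _ = q * x ^ (1 - α) := by
                rw [mul_assoc, sub_eq_add_neg, rpow_add hx, rpow_one]
    _ ≤ ENNReal.ofReal q * 2 := by
        rw [lintegral_const_mul _ (by fun_prop)]
        gcongr
        exact hμ.lintegral_rpow_le_two hK ⟨sub_nonneg.mpr hα.2, sub_le_self 1 hα.1⟩
    _ = 2 * ENNReal.ofReal q := mul_comm _ _

theorem lintegral_one_sub_exp_neg_cross_le [SFinite μ] (hμ : IsWeakProfile K μ)
    (hK : IsNearConstant α ε K) (hα : α ∈ Icc 0 1) {q : ℝ} (hq : 0 < q) :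
    ∫⁻ p, ENNReal.ofReal (1 - exp (-(q * p.1))) * ENNReal.ofReal (1 - exp (-(q * p.2))) *
      ENNReal.ofReal ((p.1 / p.2) ^ α + (p.2 / p.1) ^ α) ∂μ.prod μ ≤
      ENNReal.ofReal (4 * (q ^ (1 - α) * q)) := by
  rw [lintegral_mul_cross_rpow hμ.ae_pos α (F := fun x ↦ ENNReal.ofReal (1 - exp (-(q * x))))
    (by fun_prop)]
  grw [hμ.lintegral_one_sub_exp_neg_mul_rpow_le hα hq,
    hμ.lintegral_one_sub_exp_neg_mul_rpow_neg_le hK hα hq.le]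
  rw [ENNReal.ofReal_mul zero_le_four, ENNReal.ofReal_mul (by positivity), ENNReal.ofReal_ofNat]
  exact le_of_eq (by ring)

theorem sub_mul_integral_le [SFinite μ] (hμ : IsWeakProfile K μ) (hK : IsNearConstant α ε K)
    (hα : α ∈ Icc 0 1) {q : ℝ} (hq : 0 < q) :
    desingularizedLaplace μ q - q * ∫ x, x * exp (-(q * x)) ∂μ ≤
      desingularizedLaplace μ q ^ 2 + 2 * ε * (q ^ (1 - α) * q) := by
  have hε := hK.nonneg
  have h : 2 * ENNReal.ofReal (desingularizedLaplace μ q - q * ∫ x, x * exp (-(q * x)) ∂μ) ≤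
      2 * ENNReal.ofReal (desingularizedLaplace μ q ^ 2) +
        ENNReal.ofReal ε * ENNReal.ofReal (4 * (q ^ (1 - α) * q)) := by
    grw [← hμ.lintegral_one_sub_exp_neg_sub hq.le, hμ.two_mul_lintegral_eq hK,
      ← hμ.lintegral_prod_one_sub_exp_neg hq.le, ← hμ.lintegral_one_sub_exp_neg_cross_le hK hα hq,
      ← lintegral_const_mul _ (by fun_prop), ← lintegral_const_mul _ (by fun_prop),
      ← lintegral_add_left (by fun_prop)]
    refine lintegral_mono_ae ((ae_prod_pos hμ.ae_pos).mono fun p ⟨hy, hz⟩ ↦ ?_)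
    have hf₁ : 0 ≤ 1 - exp (-(q * p.1)) := one_sub_exp_neg_nonneg (by positivity)
    have hf₂ : 0 ≤ 1 - exp (-(q * p.2)) := one_sub_exp_neg_nonneg (by positivity)
    have hff := mul_nonneg hf₁ hf₂
    rw [← ENNReal.ofReal_mul hf₁, ← ENNReal.ofReal_ofNat 2, ← ENNReal.ofReal_mul zero_le_two,
      ← ENNReal.ofReal_mul hff, ← ENNReal.ofReal_mul hε,
      ← ENNReal.ofReal_add (by positivity) (by positivity)]
    exact ENNReal.ofReal_le_ofReal <|
      (mul_le_mul_of_nonneg_right (hK.le hy hz) hff).trans_eq (by ring)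
  rw [← ENNReal.ofReal_ofNat 2, ← ENNReal.ofReal_mul zero_le_two, ← ENNReal.ofReal_mul zero_le_two,
    ← ENNReal.ofReal_mul hε, ← ENNReal.ofReal_add (by positivity) (by positivity),
    ENNReal.ofReal_le_ofReal_iff (by positivity)] at h
  linarith

theorem isFiniteMeasure [SFinite μ] (hμ : IsWeakProfile K μ) (hK : IsNearConstant α ε K) :
    IsFiniteMeasure μ :=
  ⟨(hμ.measure_univ_le_one hK).trans_lt ENNReal.one_lt_top⟩

theorem desingularizedLaplace_eq [SFinite μ] (hμ : IsWeakProfile K μ) (hK : IsNearConstant α ε K)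
    {q : ℝ} (hq : 0 ≤ q) :
    desingularizedLaplace μ q = μ.real univ - ∫ x, exp (-(q * x)) ∂μ := by
  have := hμ.isFiniteMeasure hK
  have hint : Integrable (fun x ↦ exp (-(q * x))) μ := by
    simpa [Pi.sub_def] using (integrable_const (1 : ℝ)).sub (hμ.integrable_one_sub_exp_neg hq)
  rw [desingularizedLaplace, integral_sub (integrable_const 1) hint]
  simp

theorem desingularizedLaplace_le_measureReal_univ [SFinite μ] (hμ : IsWeakProfile K μ)
    (hK : IsNearConstant α ε K) {q : ℝ} (hq : 0 ≤ q) :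
    desingularizedLaplace μ q ≤ μ.real univ := by
  rw [hμ.desingularizedLaplace_eq hK hq]
  exact sub_le_self _ (integral_nonneg fun x ↦ (exp_pos _).le)

theorem tendsto_desingularizedLaplace_div (hμ : IsWeakProfile K μ) :
    Tendsto (fun q ↦ desingularizedLaplace μ q / q) (𝓝[>] 0) (𝓝 1) := by
  rw [← hμ.integral_id]
  simp only [desingularizedLaplace, ← integral_div]
  refine tendsto_integral_filter_of_dominated_convergence id
    (.of_forall fun _ ↦ by fun_prop) ?_ hμ.integrable_id (ae_of_all _ fun x ↦ ?_)
  · filter_upwards [self_mem_nhdsWithin] with q (hq : 0 < q)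
    filter_upwards [hμ.ae_one_sub_exp_neg_nonneg hq.le] with x hx
    rw [norm_of_nonneg (by positivity), div_le_iff₀' hq]
    exact one_sub_exp_neg_le _
  · simpa [div_eq_inv_mul] using (hasDerivAt_one_sub_exp_neg_mul 0 x).tendsto_slope_zero_right

-- The transformed profile equation reads `Q - q Q' ≈ Q ^ 2`, so `g = Q / q` solves the Riccati
-- equation `g' = -(g ^ 2 + r)` with a small error `r`.
theorem sq_desingularizedLaplace_div_sub_le [SFinite μ] (hμ : IsWeakProfile K μ)
    (hK : IsNearConstant α ε K) (hα : α ∈ Ico 0 1) {q : ℝ} (hq : 0 < q) :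
    (desingularizedLaplace μ q / q - (1 + q)⁻¹) ^ 2 ≤ 2 * (2 * ε) / (1 - α) * q ^ (1 - α) := by
  let Q := desingularizedLaplace μ
  let Q' (q : ℝ) : ℝ := ∫ x, x * exp (-(q * x)) ∂μ
  refine sq_sub_inv_one_add_le_of_riccati hα.2 (g := fun q ↦ Q q / q)
    (r := fun q ↦ (Q q - q * Q' q - Q q ^ 2) / q ^ 2) (fun q hq ↦ ?_) (fun q hq ↦ ?_)
    hμ.tendsto_desingularizedLaplace_div (fun q hq ↦ ?_) hq
  · have hQ : HasDerivAt Q (Q' q) q := hμ.hasDerivAt_desingularizedLaplace hq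
    refine (hQ.fun_div (hasDerivAt_id' q) (ne_of_gt hq)).congr_deriv ?_
    field_simp
    ring
  · exact ⟨div_nonneg (hμ.desingularizedLaplace_nonneg (le_of_lt hq)) (le_of_lt hq),
      div_le_one_of_le₀ (hμ.desingularizedLaplace_le (le_of_lt hq)) (le_of_lt hq)⟩
  · refine ⟨div_nonneg (sub_nonneg.mpr (hμ.sq_desingularizedLaplace_le hK (le_of_lt hq)))
      (sq_nonneg q), ?_⟩
    have split : q ^ (1 - α) = q * q ^ (-α) := by
      rw [sub_eq_add_neg, rpow_add hq, rpow_one]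
    have upper := hμ.sub_mul_integral_le hK (Ico_subset_Icc_self hα) hq
    rw [split] at upper
    rw [div_le_iff₀ (pow_pos hq 2)]
    linarith

end IsWeakProfile

theorem tendsto_div_one_add_atTop : Tendsto (fun q : ℝ ↦ q / (1 + q)) atTop (𝓝 1) := by
  have h := (tendsto_inv_atTop_zero.comp
    (tendsto_atTop_add_const_left atTop (1 : ℝ) tendsto_id)).const_sub 1
  rw [sub_zero] at h
  refine h.congr' ((eventually_ge_atTop 0).mono fun q hq ↦ ?_)
  simp only [Function.comp_apply, id]
  field_simp
  ring

section

variable {ι : Type*} {L : Filter ι} {α : ℝ} {ε : ι → ℝ} {K : ι → ℝ → ℝ → ℝ} {μ : ι → Measure ℝ}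
  [∀ i, SFinite (μ i)]

theorem tendsto_desingularizedLaplace (hα : α ∈ Ico 0 1) (hε : Tendsto ε L (𝓝 0))
    (hK : ∀ i, IsNearConstant α (ε i) (K i)) (hμ : ∀ i, IsWeakProfile (K i) (μ i)) {q : ℝ}
    (hq : 0 ≤ q) :
    Tendsto (fun i ↦ desingularizedLaplace (μ i) q) L (𝓝 (q / (1 + q))) := by
  rcases hq.eq_or_lt with rfl | hq
  · simp [desingularizedLaplace, tendsto_const_nhds]
  have error : Tendsto (fun i ↦ 2 * (2 * ε i) / (1 - α) * q ^ (1 - α)) L (𝓝 0) := by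
    simpa using (((hε.const_mul 2).const_mul 2).div_const (1 - α)).mul_const (q ^ (1 - α))
  have square := squeeze_zero (fun i ↦ sq_nonneg _)
    (fun i ↦ (hμ i).sq_desingularizedLaplace_div_sub_le (hK i) hα hq) error
  have diff : Tendsto (fun i ↦ desingularizedLaplace (μ i) q / q - (1 + q)⁻¹) L (𝓝 0) :=
    (tendsto_zero_iff_abs_tendsto_zero _).mpr
      (by simpa [sqrt_sq_eq_abs, Function.comp_def] using square.sqrt)
  have scaled := (diff.const_mul q).add_const (q / (1 + q))
  simp only [mul_zero, zero_add] at scaled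
  refine scaled.congr fun i ↦ ?_
  field_simp
  ring

theorem tendsto_measureReal_univ (hα : α ∈ Ico 0 1) (hε : Tendsto ε L (𝓝 0))
    (hK : ∀ i, IsNearConstant α (ε i) (K i)) (hμ : ∀ i, IsWeakProfile (K i) (μ i)) :
    Tendsto (fun i ↦ (μ i).real univ) L (𝓝 1) := by
  refine tendsto_order.mpr ⟨fun a ha ↦ ?_, fun a ha ↦ .of_forall fun i ↦ ?_⟩
  · obtain ⟨q, hqa, hq⟩ :=
      ((tendsto_div_one_add_atTop.eventually_const_lt ha).and (eventually_ge_atTop 0)).exists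
    exact ((tendsto_desingularizedLaplace hα hε hK hμ hq).eventually_const_lt hqa).mono
      fun i hi ↦ hi.trans_le ((hμ i).desingularizedLaplace_le_measureReal_univ (hK i) hq)
  · exact ((hμ i).measureReal_univ_le_one (hK i)).trans_lt ha

theorem tendsto_integral_exp_neg_mul (hα : α ∈ Ico 0 1) (hε : Tendsto ε L (𝓝 0))
    (hK : ∀ i, IsNearConstant α (ε i) (K i)) (hμ : ∀ i, IsWeakProfile (K i) (μ i)) {q : ℝ}
    (hq : 0 ≤ q) :
    Tendsto (fun i ↦ ∫ x, exp (-(q * x)) ∂μ i) L (𝓝 (1 / (q + 1))) := by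
  have h := (tendsto_measureReal_univ hα hε hK hμ).sub
    (tendsto_desingularizedLaplace hα hε hK hμ hq)
  rw [one_sub_div (by positivity), add_sub_cancel_right, add_comm] at h
  refine h.congr fun i ↦ ?_
  rw [(hμ i).desingularizedLaplace_eq (hK i) hq, sub_sub_cancel]

end

/-! ### Moments of negative order -/

theorem setLIntegral_Ioo_rpow {α : ℝ} (hα : 0 ≤ α) {y z : ℝ} (hy : 0 < y) (hz : 0 ≤ z) :
    ∫⁻ x in Ioo y (y + z), ENNReal.ofReal (x ^ (-2 - α)) =
      ENNReal.ofReal ((y ^ (-1 - α) - (y + z) ^ (-1 - α)) / (1 + α)) := by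
  have pos : ∀ x ∈ Icc y (y + z), 0 < x := fun x hx ↦ hy.trans_le hx.1
  rw [setLIntegral_Ioo_ofReal_of_hasDerivAt (F := fun x ↦ -(x ^ (-1 - α) / (1 + α)))
    (le_add_of_nonneg_right hz) (fun x hx ↦ ?_) (fun x hx ↦ ?_)
    fun x hx ↦ (rpow_pos_of_pos (pos x hx) _).le, neg_sub_neg, sub_div]
  · refine ((hasDerivAt_rpow_const (.inl (pos x hx).ne')).div_const (1 + α)).neg.congr_deriv ?_
    rw [show -1 - α - 1 = -2 - α by ring]
    field_simp
    ring
  · exact (continuousAt_rpow_const x _ (.inl (pos x hx).ne')).continuousWithinAt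

theorem rpow_neg_le_mul_setLIntegral_add {α : ℝ} (hα : 0 ≤ α) {x₀ y z : ℝ} (hx₀ : 0 < x₀)
    (hy : 0 < y) (hz : x₀ ≤ z) :
    ENNReal.ofReal (y ^ (-α)) ≤
      ENNReal.ofReal (1 + α) * (ENNReal.ofReal y *
        ∫⁻ x in Ioo y (y + z), ENNReal.ofReal (x ^ (-2 - α))) + ENNReal.ofReal (x₀ ^ (-α)) := by
  have mul_pow {x : ℝ} (hx : 0 < x) : x * x ^ (-1 - α) = x ^ (-α) := by
    nth_rewrite 1 [← rpow_one x]
    rw [← rpow_add hx, add_sub, add_neg_cancel, zero_sub]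
  have hyz : 0 < y + z := by linarith
  have far : y * (y + z) ^ (-1 - α) ≤ x₀ ^ (-α) := by
    calc y * (y + z) ^ (-1 - α) ≤ (y + z) * (y + z) ^ (-1 - α) :=
          mul_le_mul_of_nonneg_right (by linarith) (rpow_nonneg hyz.le _)
      _ = (y + z) ^ (-α) := mul_pow hyz
      _ ≤ x₀ ^ (-α) := rpow_le_rpow_of_nonpos hx₀ (by linarith) (neg_nonpos.mpr hα)
  rw [setLIntegral_Ioo_rpow hα hy (hx₀.le.trans hz), ← ENNReal.ofReal_mul hy.le,
    ← ENNReal.ofReal_mul (by positivity)]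
  refine le_trans (ENNReal.ofReal_le_ofReal ?_) ENNReal.ofReal_add_le
  rw [mul_div_assoc', mul_div_cancel₀ _ (by positivity), mul_sub, mul_pow hy]
  linarith

theorem IsNearConstant.two_mul_indicator_rpow_neg_le {α ε : ℝ} {K : ℝ → ℝ → ℝ}
    (hK : IsNearConstant α ε K) (hα : 0 ≤ α) (δ : ℝ) {x₀ y z : ℝ} (hx₀ : 0 < x₀) (hy : 0 < y)
    (hz : 0 < z) :
    2 * ((Ioi δ).indicator (fun x ↦ ENNReal.ofReal (x ^ (-α))) y * (Ioi x₀).indicator 1 z) ≤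
      ENNReal.ofReal (1 + α) * (ENNReal.ofReal (y * K y z) *
        (∫⁻ x in Ioo y (y + z), (Ioi δ).indicator (fun x ↦ ENNReal.ofReal (x ^ (-2 - α))) x)) +
        2 * ENNReal.ofReal (x₀ ^ (-α)) := by
  rcases le_or_gt y δ with hδy | hδy
  · simp [hδy]
  rcases le_or_gt z x₀ with hxz | hxz
  · simp [hxz]
  have hKyz : 2 * ENNReal.ofReal y ≤ ENNReal.ofReal (y * K y z) := by
    rw [← ENNReal.ofReal_ofNat 2, ← ENNReal.ofReal_mul zero_le_two, mul_comm]
    gcongr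
    exact hK.two_le hy hz
  rw [setLIntegral_congr_fun measurableSet_Ioo fun x hx ↦
      indicator_of_mem (mem_Ioi.mpr (hδy.trans hx.1)) _,
    indicator_of_mem (mem_Ioi.mpr hδy), indicator_of_mem (mem_Ioi.mpr hxz), Pi.one_apply, mul_one]
  grw [← hKyz, rpow_neg_le_mul_setLIntegral_add hα hx₀ hy hxz.le]
  exact le_of_eq (by ring)

namespace IsWeakProfile

variable {α ε : ℝ} {K : ℝ → ℝ → ℝ} {μ : Measure ℝ}

theorem desingularizedLaplace_sub_le_measureReal_Ioi [SFinite μ] (hμ : IsWeakProfile K μ)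
    (hK : IsNearConstant α ε K) {q x₀ : ℝ} (hq : 0 ≤ q) (hx₀ : 0 ≤ x₀) :
    desingularizedLaplace μ q - q * x₀ ≤ μ.real (Ioi x₀) := by
  have := hμ.isFiniteMeasure hK
  have htail : Integrable ((Ioi x₀).indicator (1 : ℝ → ℝ)) μ :=
    (integrable_const 1).indicator measurableSet_Ioi
  rw [sub_le_iff_le_add']
  calc desingularizedLaplace μ q ≤ ∫ x, (q * x₀ + (Ioi x₀).indicator 1 x) ∂μ := by
        refine integral_mono (hμ.integrable_one_sub_exp_neg hq) ((integrable_const _).add htail)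
          fun x ↦ ?_
        by_cases hx : x ∈ Ioi x₀
        · simp only [indicator_of_mem hx, Pi.one_apply]
          linarith [exp_pos (-(q * x)), mul_nonneg hq hx₀]
        · simp only [indicator_of_notMem hx, add_zero]
          exact (one_sub_exp_neg_le _).trans (mul_le_mul_of_nonneg_left (not_lt.mp hx) hq)
    _ = μ.real univ * (q * x₀) + μ.real (Ioi x₀) := by
        rw [integral_add (integrable_const _) htail, integral_const, smul_eq_mul,
          integral_indicator_one measurableSet_Ioi]
    _ ≤ q * x₀ + μ.real (Ioi x₀) :=
        add_le_add_left
          (mul_le_of_le_one_left (mul_nonneg hq hx₀) (hμ.measureReal_univ_le_one hK)) _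

theorem setLIntegral_Ioi_rpow_neg_eq (hμ : IsWeakProfile K μ) (α δ : ℝ) :
    ∫⁻ x in Ioi δ, ENNReal.ofReal (x ^ (-α)) ∂μ = ∫⁻ p, ENNReal.ofReal (p.1 * K p.1 p.2) *
      (∫⁻ x in Ioo p.1 (p.1 + p.2), (Ioi δ).indicator (fun x ↦ ENNReal.ofReal (x ^ (-2 - α))) x)
        ∂μ.prod μ := by
  rw [← hμ.weak _ (Measurable.indicator (by fun_prop) measurableSet_Ioi),
    ← lintegral_indicator measurableSet_Ioi]
  refine lintegral_congr_ae (hμ.ae_pos.mono fun x hx ↦ ?_)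
  simp only [indicator]
  split_ifs
  · rw [← ENNReal.ofReal_mul' (sq_nonneg x), ← rpow_natCast, ← rpow_add hx]
    congr 2
    push_cast
    ring
  · simp

theorem two_mul_measure_Ioi_mul_setLIntegral_le [SFinite μ] (hμ : IsWeakProfile K μ)
    (hK : IsNearConstant α ε K) (hα : 0 ≤ α) (δ : ℝ) {x₀ : ℝ} (hx₀ : 0 < x₀) :
    2 * (μ (Ioi x₀) * ∫⁻ x in Ioi δ, ENNReal.ofReal (x ^ (-α)) ∂μ) ≤
      ENNReal.ofReal (1 + α) * ∫⁻ x in Ioi δ, ENNReal.ofReal (x ^ (-α)) ∂μ +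
        2 * ENNReal.ofReal (x₀ ^ (-α)) := by
  let f (x : ℝ) : ℝ≥0∞ := ENNReal.ofReal (x ^ (-α))
  have hf : Measurable ((Ioi δ).indicator f) := Measurable.indicator (by fun_prop) measurableSet_Ioi
  have hone : Measurable ((Ioi x₀).indicator (1 : ℝ → ℝ≥0∞)) :=
    measurable_one.indicator measurableSet_Ioi
  calc 2 * (μ (Ioi x₀) * ∫⁻ x in Ioi δ, f x ∂μ)
      = ∫⁻ p, 2 * ((Ioi δ).indicator f p.1 * (Ioi x₀).indicator 1 p.2) ∂μ.prod μ := by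
        rw [lintegral_const_mul _ (by fun_prop), lintegral_prod_mul hf.aemeasurable
          hone.aemeasurable, lintegral_indicator measurableSet_Ioi,
          lintegral_indicator_one measurableSet_Ioi, mul_comm (μ _)]
    _ ≤ ENNReal.ofReal (1 + α) * ∫⁻ x in Ioi δ, f x ∂μ + 2 * f x₀ * (μ univ * μ univ) := by
        grw [hμ.setLIntegral_Ioi_rpow_neg_eq, lintegral_mono_ae ((ae_prod_pos hμ.ae_pos).mono
          fun p ⟨hy, hz⟩ ↦ hK.two_mul_indicator_rpow_neg_le hα δ hx₀ hy hz)]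
        rw [lintegral_add_right _ measurable_const, lintegral_const_mul' _ _ ENNReal.ofReal_ne_top,
          lintegral_const, ← univ_prod_univ, Measure.prod_prod]
    _ ≤ ENNReal.ofReal (1 + α) * ∫⁻ x in Ioi δ, f x ∂μ + 2 * f x₀ := by
        grw [hμ.measure_univ_le_one hK]
        simp

theorem setLIntegral_Ioi_rpow_neg_ne_top [SFinite μ] (hμ : IsWeakProfile K μ)
    (hK : IsNearConstant α ε K) (hα : 0 ≤ α) {δ : ℝ} (hδ : 0 < δ) :
    ∫⁻ x in Ioi δ, ENNReal.ofReal (x ^ (-α)) ∂μ ≠ ∞ := by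
  have := hμ.isFiniteMeasure hK
  refine (setLIntegral_lt_top_of_le_nnreal (measure_ne_top μ _)
    ⟨(δ ^ (-α)).toNNReal, fun x hx ↦ ?_⟩).ne
  exact ENNReal.ofReal_le_ofReal (rpow_le_rpow_of_nonpos hδ (le_of_lt hx) (neg_nonpos.mpr hα))

theorem setLIntegral_Ioi_rpow_neg_le [SFinite μ] (hμ : IsWeakProfile K μ)
    (hK : IsNearConstant α ε K) (hα : 0 ≤ α) {δ x₀ c : ℝ} (hδ : 0 < δ) (hx₀ : 0 < x₀) (hc : 0 < c)
    (mass : (1 + α) / 2 + c ≤ μ.real (Ioi x₀)) :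
    ∫⁻ x in Ioi δ, ENNReal.ofReal (x ^ (-α)) ∂μ ≤ ENNReal.ofReal (x₀ ^ (-α) / c) := by
  have := hμ.isFiniteMeasure hK
  have h := hμ.two_mul_measure_Ioi_mul_setLIntegral_le hK hα δ hx₀
  rw [← ofReal_measureReal (measure_ne_top μ (Ioi x₀)),
    ← ENNReal.ofReal_toReal (hμ.setLIntegral_Ioi_rpow_neg_ne_top hK hα hδ)] at *
  set m := (∫⁻ x in Ioi δ, ENNReal.ofReal (x ^ (-α)) ∂μ).toReal
  have hm : 0 ≤ m := ENNReal.toReal_nonneg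
  rw [← ENNReal.ofReal_ofNat 2, ← ENNReal.ofReal_mul (by positivity),
    ← ENNReal.ofReal_mul (by positivity), ← ENNReal.ofReal_mul (by positivity),
    ← ENNReal.ofReal_mul (by positivity), ← ENNReal.ofReal_add (by positivity) (by positivity),
    ENNReal.ofReal_le_ofReal_iff (by positivity)] at h
  refine ENNReal.ofReal_le_ofReal ((le_div_iff₀ hc).mpr ?_)
  nlinarith [mul_le_mul_of_nonneg_right mass hm]

theorem lintegral_rpow_neg_le [SFinite μ] (hμ : IsWeakProfile K μ)
    (hK : IsNearConstant α ε K) (hα : 0 ≤ α) {x₀ c : ℝ} (hx₀ : 0 < x₀) (hc : 0 < c)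
    (mass : (1 + α) / 2 + c ≤ μ.real (Ioi x₀)) :
    ∫⁻ x, ENNReal.ofReal (x ^ (-α)) ∂μ ≤ ENNReal.ofReal (x₀ ^ (-α) / c) := by
  obtain ⟨δ, anti, pos, lim⟩ := exists_seq_strictAnti_tendsto (0 : ℝ)
  have cover : ⋃ n, Ioi (δ n) = Ioi 0 :=
    (isGLB_of_tendsto_atTop anti.antitone lim).iUnion_Ioi_eq
  have restrict : μ.restrict (⋃ n, Ioi (δ n)) = μ := by
    rw [cover]
    exact Measure.restrict_eq_self_of_ae_mem hμ.ae_pos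
  rw [← restrict, setLIntegral_iUnion_of_directed _
    (directed_of_isDirected_le fun i j hij ↦ Ioi_subset_Ioi (anti.antitone hij))]
  exact iSup_le fun n ↦ hμ.setLIntegral_Ioi_rpow_neg_le hK hα (pos n) hx₀ hc mass

end IsWeakProfile

section

variable {ι : Type*} {L : Filter ι} {α : ℝ} {ε : ι → ℝ} {K : ι → ℝ → ℝ → ℝ} {μ : ι → Measure ℝ}
  [∀ i, SFinite (μ i)]

theorem exists_eventually_lintegral_rpow_neg_le (hα : α ∈ Ico 0 1) (hε : Tendsto ε L (𝓝 0))
    (hK : ∀ i, IsNearConstant α (ε i) (K i)) (hμ : ∀ i, IsWeakProfile (K i) (μ i)) :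
    ∃ A : ℝ, ∀ᶠ i in L, ∫⁻ x, ENNReal.ofReal (x ^ (-α)) ∂μ i ≤ ENNReal.ofReal A := by
  obtain ⟨c, hc, hcα⟩ : ∃ c > 0, (1 + α) / 2 + 2 * c < 1 :=
    ⟨(1 - α) / 8, by linarith [hα.2], by linarith [hα.2]⟩
  obtain ⟨q, hqc, hq⟩ :=
    ((tendsto_div_one_add_atTop.eventually_const_lt hcα).and (eventually_gt_atTop 0)).exists
  refine ⟨(c / q) ^ (-α) / c, ?_⟩
  filter_upwards [(tendsto_desingularizedLaplace hα hε hK hμ hq.le).eventually_const_lt hqc]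
    with i hi
  refine (hμ i).lintegral_rpow_neg_le (hK i) hα.1 (div_pos hc hq) hc ?_
  have h := (hμ i).desingularizedLaplace_sub_le_measureReal_Ioi (hK i) hq.le (div_pos hc hq).le
  rw [mul_div_cancel₀ _ hq.ne'] at h
  linarith

end

/-! ### The right-hand side of the profile equation -/

/-- The right-hand side of the profile equation at `x`, for the measure `μ = φ dx`. -/
noncomputable def collision (K : ℝ → ℝ → ℝ) (μ : Measure ℝ) (x : ℝ) : ℝ≥0∞ :=
  ∫⁻ p in crossing x, ENNReal.ofReal (p.1 * K p.1 p.2) ∂μ.prod μ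

namespace IsNearConstant

variable {α ε : ℝ} {K : ℝ → ℝ → ℝ} {μ : Measure ℝ}

theorem two_mul_setLIntegral_crossing_fst_le_collision (hK : IsNearConstant α ε K)
    (hμ : ∀ᵐ x ∂μ, 0 < x) (x : ℝ) :
    2 * ∫⁻ p in crossing x, ENNReal.ofReal p.1 ∂μ.prod μ ≤ collision K μ x := by
  rw [← lintegral_const_mul _ (by fun_prop)]
  refine lintegral_mono_ae (ae_restrict_of_ae ((ae_prod_pos hμ).mono fun p ⟨hy, hz⟩ ↦ ?_))
  rw [← ENNReal.ofReal_ofNat 2, ← ENNReal.ofReal_mul zero_le_two, mul_comm]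
  gcongr
  exact hK.two_le hy hz

theorem collision_le [SFinite μ] (hK : IsNearConstant α ε K) (hμ : ∀ᵐ x ∂μ, 0 < x) (x : ℝ) :
    collision K μ x ≤ 2 * ∫⁻ p in crossing x, ENNReal.ofReal p.1 ∂μ.prod μ +
      ENNReal.ofReal (x * ε) * (2 * ((∫⁻ y, ENNReal.ofReal (y ^ α) ∂μ) *
        ∫⁻ y, ENNReal.ofReal (y ^ (-α)) ∂μ)) := by
  let θ (p : ℝ × ℝ) : ℝ≥0∞ := ENNReal.ofReal ((p.1 / p.2) ^ α + (p.2 / p.1) ^ α)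
  have hθ : ∫⁻ p, θ p ∂μ.prod μ = 2 * ((∫⁻ y, ENNReal.ofReal (y ^ α) ∂μ) *
      ∫⁻ y, ENNReal.ofReal (y ^ (-α)) ∂μ) := by
    simpa using lintegral_mul_cross_rpow hμ α (F := 1) measurable_one
  rw [← hθ, ← lintegral_const_mul _ (by fun_prop)]
  grw [← setLIntegral_le_lintegral (crossing x) θ]
  rw [← lintegral_const_mul _ (by fun_prop), ← lintegral_add_left (by fun_prop)]
  refine lintegral_mono_ae ?_
  filter_upwards [ae_restrict_of_ae (ae_prod_pos hμ),
    ae_restrict_mem (measurableSet_crossing x)] with p ⟨hy, hz⟩ hp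
  have hε := hK.nonneg
  have hx : 0 ≤ x := (hy.trans hp.1).le
  rw [← ENNReal.ofReal_ofNat 2, ← ENNReal.ofReal_mul zero_le_two,
    ← ENNReal.ofReal_mul (mul_nonneg hx hε), ← ENNReal.ofReal_add (by positivity) (by positivity)]
  refine ENNReal.ofReal_le_ofReal ?_
  calc p.1 * K p.1 p.2 ≤ p.1 * (2 + ε * ((p.1 / p.2) ^ α + (p.2 / p.1) ^ α)) := by
        gcongr
        exact hK.le hy hz
    _ = 2 * p.1 + p.1 * ε * ((p.1 / p.2) ^ α + (p.2 / p.1) ^ α) := by ring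
    _ ≤ 2 * p.1 + x * ε * ((p.1 / p.2) ^ α + (p.2 / p.1) ^ α) := by
        gcongr
        exact hp.1.le

end IsNearConstant

theorem tendsto_collision {α : ℝ} {ι : Type*} {L : Filter ι} [L.IsCountablyGenerated]
    {ε : ι → ℝ} {K : ι → ℝ → ℝ → ℝ} {μ : ι → Measure ℝ} [∀ i, SFinite (μ i)] (hα : α ∈ Ico 0 1)
    (hε : Tendsto ε L (𝓝 0)) (hK : ∀ i, IsNearConstant α (ε i) (K i))
    (hμ : ∀ i, IsWeakProfile (K i) (μ i)) {x : ℝ} (hx : 0 ≤ x) :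
    Tendsto (fun i ↦ collision (K i) (μ i) x) L (𝓝 (ENNReal.ofReal (x ^ 2 * exp (-x)))) := by
  have := fun i ↦ (hμ i).isFiniteMeasure (hK i)
  obtain ⟨A, hA⟩ := exists_eventually_lintegral_rpow_neg_le hα hε hK hμ
  have main : Tendsto (fun i ↦ 2 * ∫⁻ p in crossing x, ENNReal.ofReal p.1 ∂(μ i).prod (μ i))
      L (𝓝 (ENNReal.ofReal (x ^ 2 * exp (-x)))) := by
    have h := ENNReal.Tendsto.const_mul (a := 2) (tendsto_lintegral_crossing_fst
      (fun i ↦ (hμ i).ae_pos) (fun n ↦ tendsto_integral_exp_neg_mul hα hε hK hμ n.cast_nonneg) hx)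
      (.inr ENNReal.ofNat_ne_top)
    rwa [← ENNReal.ofReal_ofNat 2, ← ENNReal.ofReal_mul zero_le_two, ← mul_assoc,
      mul_div_cancel₀ _ two_ne_zero, ENNReal.ofReal_ofNat] at h
  have error : Tendsto (fun i ↦ ENNReal.ofReal (x * ε i) * (2 * (2 * ENNReal.ofReal A))) L
      (𝓝 0) := by
    have h := ENNReal.Tendsto.mul_const (b := 2 * (2 * ENNReal.ofReal A))
      (ENNReal.tendsto_ofReal (hε.const_mul x)) (.inr (by finiteness))
    simpa using h
  refine tendsto_of_tendsto_of_tendsto_of_le_of_le' main (by simpa using main.add error)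
    (.of_forall fun i ↦ (hK i).two_mul_setLIntegral_crossing_fst_le_collision (hμ i).ae_pos x)
    (hA.mono fun i hi ↦ ?_)
  grw [(hK i).collision_le (hμ i).ae_pos x, hi,
    (hμ i).lintegral_rpow_le_two (hK i) (Ico_subset_Icc_self hα)]

theorem measurableSet_setOf_mem_crossing :
    MeasurableSet {q : ℝ × ℝ × ℝ | q.2 ∈ crossing q.1} :=
  (measurableSet_lt measurable_snd.fst measurable_fst).inter
    (measurableSet_lt measurable_fst (measurable_snd.fst.add measurable_snd.snd))

theorem collision_eq_zero (K : ℝ → ℝ → ℝ) {μ : Measure ℝ} [SFinite μ] {x : ℝ}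
    (hx : μ (Iio x) = 0) : collision K μ x = 0 := by
  refine setLIntegral_measure_zero _ _ <| measure_mono_null (t := Iio x ×ˢ univ) ?_ ?_
  · exact fun p hp ↦ ⟨hp.1, mem_univ _⟩
  · rw [Measure.prod_prod, hx, zero_mul]

namespace IsNearConstant

variable {α ε : ℝ} {K : ℝ → ℝ → ℝ} {μ : Measure ℝ}

theorem aemeasurable_ofReal_fst_mul (hK : IsNearConstant α ε K) (hμ : ∀ᵐ x ∂μ, 0 < x) :
    AEMeasurable (fun p ↦ ENNReal.ofReal (p.1 * K p.1 p.2)) (μ.prod μ) := by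
  have := hK.aemeasurable hμ
  fun_prop

theorem aemeasurable_indicator_crossing (hK : IsNearConstant α ε K) (hμ : ∀ᵐ x ∂μ, 0 < x) :
    AEMeasurable (fun q : ℝ × ℝ × ℝ ↦
      (crossing q.1).indicator (fun p ↦ ENNReal.ofReal (p.1 * K p.1 p.2)) q.2)
      (volume.prod (μ.prod μ)) :=
  (hK.aemeasurable_ofReal_fst_mul hμ).comp_snd.indicator measurableSet_setOf_mem_crossing

theorem aemeasurable_collision [SFinite μ] (hK : IsNearConstant α ε K) (hμ : ∀ᵐ x ∂μ, 0 < x) :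
    AEMeasurable (fun x ↦ collision K μ x) := by
  simpa only [lintegral_indicator (measurableSet_crossing _), collision] using
    (hK.aemeasurable_indicator_crossing hμ).lintegral_prod_right'

theorem lintegral_mul_collision [SFinite μ] (hK : IsNearConstant α ε K) (hμ : ∀ᵐ x ∂μ, 0 < x)
    {ψ : ℝ → ℝ≥0∞} (hψ : Measurable ψ) :
    ∫⁻ x, ψ x * collision K μ x =
      ∫⁻ p, ENNReal.ofReal (p.1 * K p.1 p.2) * (∫⁻ x in Ioo p.1 (p.1 + p.2), ψ x) ∂μ.prod μ := by
  have hG := hK.aemeasurable_ofReal_fst_mul hμ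
  simp only [collision, ← lintegral_indicator (measurableSet_crossing _)]
  simp_rw [← lintegral_const_mul'' _ (hG.indicator (measurableSet_crossing _))]
  rw [lintegral_lintegral_swap ((hψ.comp measurable_fst).aemeasurable.mul
    (hK.aemeasurable_indicator_crossing hμ))]
  refine lintegral_congr fun p ↦ ?_
  rw [← lintegral_const_mul _ hψ, ← lintegral_indicator measurableSet_Ioo]
  refine lintegral_congr fun x ↦ ?_
  by_cases hp : p ∈ crossing x
  · rw [indicator_of_mem hp, indicator_of_mem (show x ∈ Ioo p.1 (p.1 + p.2) from hp), mul_comm]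
  · rw [indicator_of_notMem hp, indicator_of_notMem (show x ∉ Ioo p.1 (p.1 + p.2) from hp),
      mul_zero]

theorem le_mul_div (hK : IsNearConstant α ε K) (hα : α ∈ Icc 0 1) {b d y z : ℝ} (hd : 0 < d)
    (hy : y ∈ Icc d b) (hz : d ≤ z) : K y z ≤ (2 + ε * ((b / d) ^ α + 1)) * (z / d) := by
  have hε := hK.nonneg
  have hy₀ := hd.trans_le hy.1
  have hz₀ := hd.trans_le hz
  have hα₀ := hα.1
  have hb₀ := hy₀.trans_le hy.2
  have one_le : 1 ≤ z / d := (one_le_div hd).mpr hz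
  calc K y z ≤ 2 + ε * ((y / z) ^ α + (z / y) ^ α) := hK.le hy₀ hz₀
    _ ≤ 2 + ε * ((b / d) ^ α + z / d) := by
      gcongr
      · exact hy.2
      · calc (z / y) ^ α ≤ (z / d) ^ α := by
              gcongr
              exact hy.1
          _ ≤ z / d := rpow_le_self_of_one_le one_le hα.2
    _ ≤ (2 + ε * ((b / d) ^ α + 1)) * (z / d) := by
      have : 0 ≤ 2 + ε * (b / d) ^ α := by positivity
      nlinarith

theorem ofReal_mul_ofReal_le (hK : IsNearConstant α ε K) (hα : α ∈ Icc 0 1) {b d y z : ℝ}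
    (hd : 0 < d) (hy : y ∈ Icc d b) (hz : d ≤ z) :
    ENNReal.ofReal (y * K y z) * ENNReal.ofReal b ≤
      ENNReal.ofReal (b * (2 + ε * ((b / d) ^ α + 1)) / d) *
        (ENNReal.ofReal y * ENNReal.ofReal z) := by
  have hε := hK.nonneg
  have hy₀ := hd.trans_le hy.1
  have hb := hy₀.trans_le hy.2
  rw [← ENNReal.ofReal_mul' hb.le, ← ENNReal.ofReal_mul hy₀.le,
    ← ENNReal.ofReal_mul (by positivity)]
  refine ENNReal.ofReal_le_ofReal ?_
  calc y * K y z * b ≤ y * ((2 + ε * ((b / d) ^ α + 1)) * (z / d)) * b := by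
        gcongr
        exact hK.le_mul_div hα hd hy hz
    _ = b * (2 + ε * ((b / d) ^ α + 1)) / d * (y * z) := by ring

-- A pair with `y < x₀` or `z < x₀` is counted by the collision integral at `x₀`, up to a swap; for
-- the remaining pairs the kernel is bounded by a multiple of `z`.
theorem ofReal_mul_volume_le (hK : IsNearConstant α ε K) (hα : α ∈ Icc 0 1) {x₀ : ℝ}
    (hx₀ : 0 < x₀) (b : ℝ) {p : ℝ × ℝ} (hp : 0 < p.1 ∧ 0 < p.2) :
    ENNReal.ofReal (p.1 * K p.1 p.2) * volume (Ioo x₀ b ∩ Ioo p.1 (p.1 + p.2)) ≤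
      ENNReal.ofReal b *
        ((crossing x₀).indicator (fun p ↦ ENNReal.ofReal (p.1 * K p.1 p.2)) p +
          (crossing x₀).indicator (fun p ↦ ENNReal.ofReal (p.1 * K p.1 p.2)) p.swap) +
      ENNReal.ofReal (b * (2 + ε * ((b / x₀) ^ α + 1)) / x₀) *
        (ENNReal.ofReal p.1 * ENNReal.ofReal p.2) := by
  obtain ⟨y, z⟩ := p
  obtain ⟨hy, hz⟩ : 0 < y ∧ 0 < z := hp
  have hKp := zero_le_two.trans (hK.two_le hy hz)
  rcases le_or_gt b y with hby | hby
  · simp [Ioo_inter_Ioo, hby]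
  have volume_le : volume (Ioo x₀ b ∩ Ioo y (y + z)) ≤ ENNReal.ofReal b := by
    grw [inter_subset_left, volume_Ioo, sub_le_self b hx₀.le]
  have volume_le' : volume (Ioo x₀ b ∩ Ioo y (y + z)) ≤ ENNReal.ofReal z := by
    grw [inter_subset_right, volume_Ioo, add_sub_cancel_left]
  rcases lt_or_ge y x₀ with hyx | hyx
  · rcases le_or_gt (y + z) x₀ with hyz | hyz
    · simp [Ioo_inter_Ioo, hyz]
    · grw [volume_le, indicator_of_mem (show (y, z) ∈ crossing x₀ from ⟨hyx, hyz⟩), mul_comm]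
      exact le_add_right (mul_le_mul_right (le_add_right le_rfl) _)
  rcases lt_or_ge z x₀ with hzx | hzx
  · have hswap : (y, z).swap ∈ crossing x₀ := ⟨hzx, hyx.trans_lt (lt_add_of_pos_left y hz)⟩
    grw [volume_le', indicator_of_mem hswap]
    refine le_add_right (le_trans ?_ (mul_le_mul_right (le_add_left le_rfl) _))
    rw [← ENNReal.ofReal_mul (by positivity), ← ENNReal.ofReal_mul (hy.trans hby).le]
    refine ENNReal.ofReal_le_ofReal ?_
    calc y * K y z * z = y * (z * K z y) := by rw [hK.symm hy hz]; ring
      _ ≤ b * (z * K z y) := by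
        rw [hK.symm hz hy]
        gcongr
  · grw [volume_le]
    exact le_add_left (hK.ofReal_mul_ofReal_le hα hx₀ ⟨hyx, hby.le⟩ hzx)

theorem setLIntegral_collision_ne_top [SFinite μ] (hK : IsNearConstant α ε K) (hα : α ∈ Icc 0 1)
    (hμ : ∀ᵐ x ∂μ, 0 < x) (hμ₁ : ∫⁻ x, ENNReal.ofReal x ∂μ ≠ ∞) {x₀ : ℝ} (hx₀ : 0 < x₀)
    (h : collision K μ x₀ ≠ ∞) (b : ℝ) : ∫⁻ x in Ioo x₀ b, collision K μ x ≠ ∞ := by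
  have hG := (hK.aemeasurable_ofReal_fst_mul hμ).indicator (measurableSet_crossing x₀)
  have tested : ∫⁻ x in Ioo x₀ b, collision K μ x = ∫⁻ p, ENNReal.ofReal (p.1 * K p.1 p.2) *
      volume (Ioo x₀ b ∩ Ioo p.1 (p.1 + p.2)) ∂μ.prod μ := by
    have h := hK.lintegral_mul_collision hμ (ψ := (Ioo x₀ b).indicator 1)
      (measurable_one.indicator measurableSet_Ioo)
    simp_rw [lintegral_indicator_one measurableSet_Ioo,
      Measure.restrict_apply measurableSet_Ioo] at h
    rw [← h, ← lintegral_indicator measurableSet_Ioo]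
    simp only [← indicator_mul_left, Pi.one_apply, one_mul]
  rw [tested]
  refine ne_top_of_le_ne_top ?_ (lintegral_mono_ae ((ae_prod_pos hμ).mono fun p hp ↦
    hK.ofReal_mul_volume_le hα hx₀ b hp))
  rw [lintegral_add_right _ (by fun_prop), lintegral_const_mul' _ _ ENNReal.ofReal_ne_top,
    lintegral_const_mul' _ _ ENNReal.ofReal_ne_top, ← two_mul_lintegral_prod_self hG,
    lintegral_indicator (measurableSet_crossing x₀), lintegral_prod_mul (by fun_prop)
    (by fun_prop)]
  rw [collision] at h
  finiteness

theorem ae_collision_lt_top [SFinite μ] (hK : IsNearConstant α ε K) (hα : α ∈ Icc 0 1)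
    (hμ : ∀ᵐ x ∂μ, 0 < x) (hμ₁ : ∫⁻ x, ENNReal.ofReal x ∂μ ≠ ∞)
    (h : ∀ δ > 0, ∃ x ∈ Ioo 0 δ, collision K μ x ≠ ∞) :
    ∀ᵐ x ∂volume.restrict (Ioi 0), collision K μ x < ∞ := by
  choose x hx hfin using fun n : ℕ ↦ h (1 / (n + 1)) (by positivity)
  have local_finite (n m : ℕ) : ∀ᵐ y ∂volume.restrict (Ioo (x n) m), collision K μ y < ∞ :=
    ae_lt_top' (hK.aemeasurable_collision hμ).restrict
      (hK.setLIntegral_collision_ne_top hα hμ hμ₁ (hx n).1 (hfin n) m)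
  have cover : Ioi (0 : ℝ) ⊆ ⋃ n : ℕ, ⋃ m : ℕ, Ioo (x n) m := fun y hy ↦ by
    obtain ⟨n, hn⟩ := exists_nat_one_div_lt (mem_Ioi.mp hy)
    obtain ⟨m, hm⟩ := exists_nat_gt y
    exact mem_iUnion₂.mpr ⟨n, m, (hx n).2.trans hn, hm⟩
  refine ae_restrict_of_ae_restrict_of_subset cover ?_
  simpa only [ae_restrict_iUnion_iff] using local_finite

end IsNearConstant

/-! ### Profiles -/

theorem integral_integral_eq_toReal_lintegral_prod {β γ : Type*} [MeasurableSpace β]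
    [MeasurableSpace γ] {μ : Measure β} {ν : Measure γ} [SFinite ν] {f : β × γ → ℝ}
    (hf : AEStronglyMeasurable f (μ.prod ν)) (hf₀ : ∀ᵐ x ∂μ, ∀ᵐ y ∂ν, 0 ≤ f (x, y))
    (hfi : ∀ᵐ x ∂μ, Integrable (fun y ↦ f (x, y)) ν) :
    ∫ x, ∫ y, f (x, y) ∂ν ∂μ = (∫⁻ p, ENNReal.ofReal (f p) ∂μ.prod ν).toReal := by
  have hfm : AEMeasurable (fun p ↦ ENNReal.ofReal (f p)) (μ.prod ν) :=
    hf.aemeasurable.ennreal_ofReal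
  rw [lintegral_prod _ hfm, ← integral_toReal hfm.lintegral_prod_right']
  · refine integral_congr_ae ?_
    filter_upwards [hf₀, hfi] with x hx₀ hxi
    exact integral_eq_lintegral_of_nonneg_ae hx₀ hxi.aestronglyMeasurable
  · filter_upwards [hfi] with x hx
    exact hx.lintegral_lt_top

/-- The measure `φ(x) dx` on `(0,∞)`. -/
noncomputable def profileMeasure (φ : ℝ → ℝ) : Measure ℝ :=
  (volume.restrict (Ioi 0)).withDensity fun x ↦ ENNReal.ofReal (φ x)

instance (φ : ℝ → ℝ) : SFinite (profileMeasure φ) := by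
  unfold profileMeasure
  infer_instance

theorem ae_pos_profileMeasure (φ : ℝ → ℝ) : ∀ᵐ x ∂profileMeasure φ, 0 < x :=
  (withDensity_absolutelyContinuous _ _).ae_le (ae_restrict_mem measurableSet_Ioi)

theorem lintegral_profileMeasure {φ : ℝ → ℝ} (hφ : LocallyIntegrableOn φ (Ioi 0))
    (f : ℝ → ℝ≥0∞) :
    ∫⁻ x, f x ∂profileMeasure φ = ∫⁻ x in Ioi 0, ENNReal.ofReal (φ x) * f x :=
  lintegral_withDensity_eq_lintegral_mul_non_measurable₀ _
    hφ.aestronglyMeasurable.aemeasurable.ennreal_ofReal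
    (ae_of_all _ fun _ ↦ ENNReal.ofReal_lt_top) f

theorem setLIntegral_prod_profileMeasure {φ : ℝ → ℝ} (hφ : LocallyIntegrableOn φ (Ioi 0))
    {s : Set (ℝ × ℝ)} (hs : MeasurableSet s) (f : ℝ × ℝ → ℝ≥0∞) :
    ∫⁻ p in s, f p ∂(profileMeasure φ).prod (profileMeasure φ) =
      ∫⁻ p in s, ENNReal.ofReal (φ p.1) * ENNReal.ofReal (φ p.2) * f p
        ∂(volume.restrict (Ioi 0)).prod (volume.restrict (Ioi 0)) := by
  have hφm := hφ.aestronglyMeasurable.aemeasurable.ennreal_ofReal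
  rw [profileMeasure, prod_withDensity₀ hφm hφm]
  exact setLIntegral_withDensity_eq_setLIntegral_mul_non_measurable₀ _
    (hφm.comp_fst.mul hφm.comp_snd).restrict _ hs
    (ae_of_all _ fun _ ↦ ENNReal.mul_lt_top ENNReal.ofReal_lt_top ENNReal.ofReal_lt_top)

theorem setIntegral_Ioo_setIntegral_Ioi {x : ℝ} (f : ℝ × ℝ → ℝ) :
    ∫ y in Ioo 0 x, ∫ z in Ioi (x - y), f (y, z) =
      ∫ y in Ioi 0, ∫ z in Ioi 0, (crossing x).indicator f (y, z) := by
  rw [← Ioi_inter_Iio, inter_comm, ← Measure.restrict_restrict measurableSet_Iio,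
    ← integral_indicator measurableSet_Iio]
  refine integral_congr_ae (ae_of_all _ fun y ↦ ?_)
  beta_reduce
  rcases lt_or_ge y x with hyx | hyx
  · have hsub : Ioi (x - y) ⊆ Ioi 0 := Ioi_subset_Ioi (sub_nonneg.mpr hyx.le)
    have section_eq (z : ℝ) :
        (crossing x).indicator f (y, z) = (Ioi (x - y)).indicator (fun z ↦ f (y, z)) z := by
      simp only [indicator, crossing, mem_ofPred_eq, hyx, true_and, mem_Ioi, sub_lt_iff_lt_add']
    simp only [indicator_of_mem (mem_Iio.mpr hyx), section_eq]
    rw [integral_indicator measurableSet_Ioi, Measure.restrict_restrict measurableSet_Ioi,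
      inter_eq_self_of_subset_left hsub]
  · have (z : ℝ) : (y, z) ∉ crossing x := fun h ↦ hyx.not_gt h.1
    simp [this, hyx]

namespace IsProfile

variable {α ε : ℝ} {K : ℝ → ℝ → ℝ} {φ : ℝ → ℝ}

theorem aestronglyMeasurable_indicator_crossing (hφ : IsProfile K φ) (hK : IsNearConstant α ε K)
    (x : ℝ) : AEStronglyMeasurable
      ((crossing x).indicator fun p ↦ p.1 * K p.1 p.2 * φ p.1 * φ p.2)
      ((volume.restrict (Ioi 0)).prod (volume.restrict (Ioi 0))) := by
  have hpos : ∀ᵐ x ∂volume.restrict (Ioi (0 : ℝ)), 0 < x := ae_restrict_mem measurableSet_Ioi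
  have hKm := hK.aemeasurable hpos
  have hφm := hφ.1.aestronglyMeasurable.aemeasurable
  have := hφm.comp_fst (ν := volume.restrict (Ioi (0 : ℝ)))
  have := hφm.comp_snd (μ := volume.restrict (Ioi (0 : ℝ)))
  exact AEStronglyMeasurable.indicator (AEMeasurable.aestronglyMeasurable (by fun_prop))
    (measurableSet_crossing x)

theorem ae_integrable_indicator_crossing (hφ : IsProfile K φ) (hK : IsNearConstant α ε K)
    (hα : α ∈ Icc 0 1) (x : ℝ) : ∀ᵐ y ∂volume.restrict (Ioi 0), Integrable (fun z ↦
      (crossing x).indicator (fun p ↦ p.1 * K p.1 p.2 * φ p.1 * φ p.2) (y, z))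
      (volume.restrict (Ioi 0)) := by
  have hε := hK.nonneg
  have hm := (hφ.aestronglyMeasurable_indicator_crossing hK x).prodMk_left
  obtain ⟨-, hφ₀, hφ₁, -⟩ := hφ
  filter_upwards [hm, hφ₀, ae_restrict_mem measurableSet_Ioi] with y hym hy₀ hy
  rw [mem_Ioi] at hy
  rcases le_or_gt x y with hxy | hxy
  · simp [crossing, hxy.not_gt]
  set d := min y (x - y)
  have hd : 0 < d := lt_min hy (sub_pos.mpr hxy)
  refine (hφ₁.const_mul (y * ((2 + ε * ((y / d) ^ α + 1)) / d) * φ y)).mono' hym ?_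
  filter_upwards [hφ₀, ae_restrict_mem measurableSet_Ioi] with z hz₀ hz
  rw [mem_Ioi] at hz
  have bound_nonneg : 0 ≤ y * ((2 + ε * ((y / d) ^ α + 1)) / d) * φ y * (z * φ z) := by
    positivity
  by_cases hp : (y, z) ∈ crossing x
  · have hdz : d ≤ z := (min_le_right _ _).trans (sub_left_lt_of_lt_add hp.2).le
    have hKp := zero_le_two.trans (hK.two_le hy hz)
    rw [indicator_of_mem hp, norm_of_nonneg (by positivity)]
    calc y * K y z * φ y * φ z ≤ y * ((2 + ε * ((y / d) ^ α + 1)) * (z / d)) * φ y * φ z := by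
          gcongr
          exact hK.le_mul_div hα hd ⟨min_le_left _ _, le_rfl⟩ hdz
      _ = y * ((2 + ε * ((y / d) ^ α + 1)) / d) * φ y * (z * φ z) := by ring
  · rwa [indicator_of_notMem hp, norm_zero]

theorem setIntegral_eq_toReal_collision (hφ : IsProfile K φ) (hK : IsNearConstant α ε K)
    (hα : α ∈ Icc 0 1) (x : ℝ) :
    ∫ y in Ioo 0 x, ∫ z in Ioi (x - y), y * K y z * φ y * φ z =
      (collision K (profileMeasure φ) x).toReal := by
  have hpos : ∀ᵐ x ∂volume.restrict (Ioi (0 : ℝ)), 0 < x ∧ 0 ≤ φ x :=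
    (ae_restrict_mem measurableSet_Ioi).and hφ.2.1
  have nonneg {y z : ℝ} (hy : 0 < y ∧ 0 ≤ φ y) (hz : 0 < z ∧ 0 ≤ φ z) :
      0 ≤ y * K y z * φ y * φ z := by
    have := zero_le_two.trans (hK.two_le hy.1 hz.1)
    have := hy.1
    have := hy.2
    have := hz.2
    positivity
  rw [setIntegral_Ioo_setIntegral_Ioi (fun p ↦ p.1 * K p.1 p.2 * φ p.1 * φ p.2),
    integral_integral_eq_toReal_lintegral_prod
      (hφ.aestronglyMeasurable_indicator_crossing hK x) ?_
      (hφ.ae_integrable_indicator_crossing hK hα x),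
    collision, setLIntegral_prod_profileMeasure hφ.1 (measurableSet_crossing x),
    ← lintegral_indicator (measurableSet_crossing x)]
  · refine congrArg ENNReal.toReal (lintegral_congr_ae ?_)
    filter_upwards [Measure.quasiMeasurePreserving_fst.ae hpos,
      Measure.quasiMeasurePreserving_snd.ae hpos] with p hy hz
    by_cases hp : p ∈ crossing x
    · simp only [indicator_of_mem hp]
      rw [ENNReal.ofReal_mul' hz.2, ENNReal.ofReal_mul' hy.2]
      ring
    · simp only [indicator_of_notMem hp, ENNReal.ofReal_zero]
  · filter_upwards [hpos] with y hy
    filter_upwards [hpos] with z hz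
    exact indicator_apply_nonneg fun _ ↦ nonneg hy hz

theorem lintegral_ofReal_profileMeasure (hφ : IsProfile K φ) (hφ₁ : IsNormalised φ) :
    ∫⁻ x, ENNReal.ofReal x ∂profileMeasure φ = 1 := by
  have hpos : ∀ᵐ x ∂volume.restrict (Ioi (0 : ℝ)), 0 < x ∧ 0 ≤ φ x :=
    (ae_restrict_mem measurableSet_Ioi).and hφ.2.1
  rw [lintegral_profileMeasure hφ.1, ← ENNReal.ofReal_one, ← hφ₁,
    ofReal_integral_eq_lintegral_ofReal hφ.2.2.1
      (hpos.mono fun x hx ↦ mul_nonneg hx.1.le hx.2)]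
  refine lintegral_congr_ae (hpos.mono fun x hx ↦ ?_)
  beta_reduce
  rw [mul_comm, ← ENNReal.ofReal_mul hx.1.le]

theorem ae_sq_mul_eq_toReal_collision (hφ : IsProfile K φ) (hK : IsNearConstant α ε K)
    (hα : α ∈ Icc 0 1) : ∀ᵐ x ∂volume.restrict (Ioi 0),
      x ^ 2 * φ x = (collision K (profileMeasure φ) x).toReal := by
  filter_upwards [hφ.2.2.2] with x hx
  rw [hx, hφ.setIntegral_eq_toReal_collision hK hα]

theorem exists_collision_ne_top (hφ : IsProfile K φ) (hK : IsNearConstant α ε K)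
    (hα : α ∈ Icc 0 1) {δ : ℝ} (hδ : 0 < δ) :
    ∃ x ∈ Ioo 0 δ, collision K (profileMeasure φ) x ≠ ∞ := by
  -- Where the double integral diverges the Bochner integral is `0`, so there `φ = 0`; if this
  -- happened on all of `(0, δ)`, no pair would contribute to the integral at `δ / 2`.
  by_contra! h
  have vanish : ∀ᵐ x ∂volume.restrict (Ioi 0), x < δ → φ x = 0 := by
    filter_upwards [hφ.ae_sq_mul_eq_toReal_collision hK hα, ae_restrict_mem measurableSet_Ioi]
      with x hx hx₀ hxδ
    rw [h x ⟨hx₀, hxδ⟩, ENNReal.toReal_top] at hx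
    exact (mul_eq_zero.mp hx).resolve_left (pow_ne_zero 2 (ne_of_gt hx₀))
  have null : profileMeasure φ (Iio δ) = 0 := by
    rw [profileMeasure, withDensity_apply _ measurableSet_Iio]
    refine (setLIntegral_congr_fun_ae measurableSet_Iio (vanish.mono fun x hx hxδ ↦ ?_)).trans
      lintegral_zero
    rw [hx hxδ, ENNReal.ofReal_zero]
  have half := h (δ / 2) ⟨half_pos hδ, half_lt_self hδ⟩
  rw [collision_eq_zero K (measure_mono_null (Iio_subset_Iio (half_le_self hδ.le)) null)] at half
  exact ENNReal.zero_ne_top half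

theorem isWeakProfile (hφ : IsProfile K φ) (hφ₁ : IsNormalised φ) (hK : IsNearConstant α ε K)
    (hα : α ∈ Icc 0 1) : IsWeakProfile K (profileMeasure φ) where
  ae_pos := ae_pos_profileMeasure φ
  first_moment := hφ.lintegral_ofReal_profileMeasure hφ₁
  weak ψ hψ := by
    have hpos := ae_pos_profileMeasure φ
    have fin := hK.ae_collision_lt_top hα hpos
      (by simp [hφ.lintegral_ofReal_profileMeasure hφ₁])
      fun δ hδ ↦ hφ.exists_collision_ne_top hK hα hδ
    have support : Function.support (fun x ↦ ψ x * collision K (profileMeasure φ) x) ⊆ Ioi 0 := by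
      refine fun x hx ↦ mem_Ioi.mpr <| not_le.mp fun hx₀ ↦ right_ne_zero_of_mul hx ?_
      refine collision_eq_zero K ?_
      exact measure_mono_null (fun y hy ↦ (hy.trans_le hx₀).not_gt) (ae_iff.mp hpos)
    rw [← hK.lintegral_mul_collision hpos hψ, lintegral_profileMeasure hφ.1,
      ← setLIntegral_eq_of_support_subset support]
    refine lintegral_congr_ae ?_
    filter_upwards [hφ.ae_sq_mul_eq_toReal_collision hK hα, fin] with x hx hfin
    rw [mul_left_comm, mul_comm (ENNReal.ofReal (φ x)), ← ENNReal.ofReal_mul (sq_nonneg x), hx,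
      ENNReal.ofReal_toReal hfin.ne]

end IsProfile

theorem GoodW.isNearConstant_kern {α ε : ℝ} {W : ℝ → ℝ → ℝ} (hW : GoodW α W) (hε : 0 ≤ ε) :
    IsNearConstant α ε (Kern ε W) where
  measurable := by
    have hcont : ContinuousOn (Function.uncurry (Kern ε W)) (Ioi 0 ×ˢ Ioi 0) :=
      continuousOn_const.add (continuousOn_const.mul hW.1)
    classical
    rw [← piecewise_eq_indicator]
    exact hcont.measurable_piecewise continuousOn_const (measurableSet_Ioi.prod measurableSet_Ioi)
  symm y z hy hz := by rw [Kern, Kern, hW.2.1 y z hy hz]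
  two_le y z hy hz := le_add_of_nonneg_right (mul_nonneg hε (hW.2.2.2 y z hy hz).1)
  le y z hy hz := by
    rw [Kern]
    gcongr
    exact (hW.2.2.2 y z hy hz).2

theorem stmt6_general {α : ℝ} (hα : α ∈ Ico 0 1) {K : ℕ → ℝ → ℝ → ℝ} {ε : ℕ → ℝ}
    (hε : Tendsto ε atTop (𝓝 0)) (hK : ∀ k, IsNearConstant α (ε k) (K k)) {φ : ℕ → ℝ → ℝ}
    (hφ : ∀ k, IsProfile (K k) (φ k) ∧ IsNormalised (φ k)) :
    (∀ x : ℝ, 0 < x →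
      (∀ k, x ^ 2 * φ k x = ∫ y in Ioo 0 x, ∫ z in Ioi (x - y), y * K k y z * φ k y * φ k z) →
      Tendsto (fun k ↦ φ k x) atTop (𝓝 (exp (-x)))) ∧
    ∀ᵐ x ∂volume.restrict (Ioi 0), Tendsto (fun k ↦ φ k x) atTop (𝓝 (exp (-x))) := by
  have hα' := Ico_subset_Icc_self hα
  have hμ (k : ℕ) := (hφ k).1.isWeakProfile (hφ k).2 (hK k) hα'
  have pointwise (x : ℝ) (hx : 0 < x) (heq : ∀ k, x ^ 2 * φ k x =
      ∫ y in Ioo 0 x, ∫ z in Ioi (x - y), y * K k y z * φ k y * φ k z) :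
      Tendsto (fun k ↦ φ k x) atTop (𝓝 (exp (-x))) := by
    have h := (ENNReal.tendsto_toReal ENNReal.ofReal_ne_top).comp
      (tendsto_collision hα hε hK hμ hx.le)
    simp only [Function.comp_def, ← (hφ _).1.setIntegral_eq_toReal_collision (hK _) hα',
      ← heq, ENNReal.toReal_ofReal (mul_nonneg (sq_nonneg x) (exp_pos (-x)).le)] at h
    have hx₂ : x ^ 2 ≠ 0 := by positivity
    have hlim := h.div_const (x ^ 2)
    rw [mul_div_cancel_left₀ _ hx₂] at hlim
    exact hlim.congr fun k ↦ mul_div_cancel_left₀ _ hx₂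
  refine ⟨pointwise, ?_⟩
  filter_upwards [ae_all_iff.mpr fun k ↦ (hφ k).1.2.2.2, ae_restrict_mem measurableSet_Ioi]
    with x heq hx
  exact pointwise x hx heq

theorem stmt6 (α : ℝ) (hα : α ∈ Ioo (0:ℝ) 1) (W : ℝ → ℝ → ℝ) (hW : GoodW α W)
    (ε : ℕ → ℝ) (hε : ∀ k, 0 < ε k) (hlim : Tendsto ε atTop (nhds 0))
    (φ : ℕ → ℝ → ℝ) (hφ : ∀ k, IsProfile (Kern (ε k) W) (φ k) ∧ IsNormalised (φ k)) :
    (∀ x : ℝ, 0 < x →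
      (∀ k, x ^ 2 * φ k x =
        ∫ y in Ioo 0 x, ∫ z in Ioi (x - y), y * Kern (ε k) W y z * φ k y * φ k z) →
      Tendsto (fun k => φ k x) atTop (nhds (exp (-x)))) ∧
    (∀ᵐ x ∂(volume.restrict (Ioi (0:ℝ))),
      Tendsto (fun k => φ k x) atTop (nhds (exp (-x)))) :=
  stmt6_general ⟨hα.1.le, hα.2⟩ hlim (fun k ↦ hW.isNearConstant_kern (hε k).le) hφ
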